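/- arXiv:2310.17520 — 5 statements merged into one kernel-verified Lean document; each statement's English description precedes it below -/
import Mathlib

section
/- Let G=(V,E) be a finite connected graph with n vertices, normalized adjacency eigenvalues μ_n ≤ … ≤ μ_2 ≤ μ_1 = 1, and edge-expansion h. Then 1 + μ_{n-1} ≥ ((1-μ_2)^2 / (2h^2)) · (√(1 + h^2/(1-μ_2)) − 1)^2. -/
open Finset Polynomial

noncomputable section
open scoped Classical

/-- The normalized adjacency matrix `D⁻¹A` of a finite graph. -/
def normAdj {V : Type*} [Fintype V] (G : SimpleGraph V) : Matrix V V ℝ :=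
  Matrix.of fun u v => if G.Adj u v then ((G.degree u : ℝ))⁻¹ else 0

/-- The volume of a vertex subset: the sum of the degrees of its vertices. -/
def vol {V : Type*} [Fintype V] (G : SimpleGraph V) (S : Finset V) : ℝ :=
  ∑ u ∈ S, (G.degree u : ℝ)

/-- The number of boundary edges of a vertex subset, i.e. edges with exactly one
endpoint in `S`. -/
def bdry {V : Type*} [Fintype V] (G : SimpleGraph V) (S : Finset V) : ℝ :=
  ∑ u ∈ S, ∑ v ∈ Sᶜ, if G.Adj u v then (1 : ℝ) else 0

/-- The edge-expansion (Cheeger constant)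
`h = min_{∅ ≠ S ⊊ V} |∂S| / min(vol S, vol Sᶜ)`. -/
def cheeger {V : Type*} [Fintype V] (G : SimpleGraph V) : ℝ :=
  sInf { x : ℝ | ∃ S : Finset V, S.Nonempty ∧ S ≠ Finset.univ ∧
    x = bdry G S / min (vol G S) (vol G Sᶜ) }

theorem integral_indicator_Ico_min_max (x y : ℝ) :
    ∫ t, (Set.Ico (min x y) (max x y)).indicator (fun _ => (1 : ℝ)) t = |x - y| := by
  rw [MeasureTheory.integral_indicator measurableSet_Ico]
  simp [MeasureTheory.measureReal_def, max_sub_min_eq_abs, abs_sub_comm]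

/-- A symmetric weight that is nonnegative on all cuts is nonnegative on all line metrics. -/
theorem sum_mul_abs_sub_nonneg {V : Type*} [Fintype V] (K : V → V → ℝ)
    (hsymm : ∀ u v, K u v = K v u)
    (hcut : ∀ S : Finset V, 0 ≤ ∑ u ∈ S, ∑ v ∈ Sᶜ, K u v) (φ : V → ℝ) :
    0 ≤ ∑ u, ∑ v, K u v * |φ u - φ v| := by
  have hint : ∀ u v, MeasureTheory.Integrable (fun t =>
      K u v * (Set.Ico (min (φ u) (φ v)) (max (φ u) (φ v))).indicator (fun _ => (1 : ℝ)) t) :=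
    fun u v => ((MeasureTheory.integrable_indicator_iff measurableSet_Ico).2
      (by simp)).const_mul _
  have heq : ∑ u, ∑ v, K u v * |φ u - φ v| = ∫ t, ∑ u, ∑ v,
      K u v * (Set.Ico (min (φ u) (φ v)) (max (φ u) (φ v))).indicator (fun _ => (1 : ℝ)) t := by
    rw [MeasureTheory.integral_finsetSum _
      fun u _ => MeasureTheory.integrable_finsetSum _ fun v _ => hint u v]
    refine sum_congr rfl fun u _ => ?_
    rw [MeasureTheory.integral_finsetSum _ fun v _ => hint u v]
    refine sum_congr rfl fun v _ => ?_
    rw [MeasureTheory.integral_const_mul, integral_indicator_Ico_min_max]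
  rw [heq]
  refine MeasureTheory.integral_nonneg fun t => ?_
  set S : Finset V := univ.filter fun u => φ u ≤ t with hS
  have hsplit : ∑ u, ∑ v,
      K u v * (Set.Ico (min (φ u) (φ v)) (max (φ u) (φ v))).indicator (fun _ => (1 : ℝ)) t
      = ∑ u ∈ S, ∑ v ∈ Sᶜ, K u v + ∑ u ∈ Sᶜ, ∑ v ∈ S, K u v := by
    rw [← sum_add_sum_compl S]
    congr 1
    · refine sum_congr rfl fun u hu => ?_
      have hu' : φ u ≤ t := by simpa [hS] using hu
      rw [← sum_add_sum_compl S, sum_eq_zero, zero_add]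
      · refine sum_congr rfl fun v hv => ?_
        have hv' : t < φ v := by simpa [hS] using hv
        simp [Set.indicator, hu', hv']
      · intro v hv
        have hv' : φ v ≤ t := by simpa [hS] using hv
        simp [Set.indicator, hu', hv']
    · refine sum_congr rfl fun u hu => ?_
      have hu' : t < φ u := by simpa [hS] using hu
      rw [← sum_add_sum_compl S, sum_eq_zero (s := Sᶜ), add_zero]
      · refine sum_congr rfl fun v hv => ?_
        have hv' : φ v ≤ t := by simpa [hS] using hv
        simp [Set.indicator, hu', hv']
      · intro v hv
        have hv' : t < φ v := by simpa [hS] using hv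
        simp [Set.indicator, not_le.2 hu', not_le.2 hv']
  have hswap : ∑ u ∈ Sᶜ, ∑ v ∈ S, K u v = ∑ u ∈ S, ∑ v ∈ Sᶜ, K u v := by
    rw [sum_comm]
    exact sum_congr rfl fun u _ => sum_congr rfl fun v _ => hsymm v u
  simp only [Pi.zero_apply]
  rw [hsplit, hswap]
  linarith [hcut S]

theorem sum_mul_add_sq {V : Type*} [Fintype V] (A : Matrix V V ℝ) (hA : A.IsSymm) (p : V → ℝ)
    (s : ℝ) (hs : s ^ 2 = 1) :
    ∑ u, ∑ v, A u v * (p u + s * p v) ^ 2 =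
      2 * (∑ u, (∑ v, A u v) * (p u * p u) + s * ∑ u, ∑ v, A u v * (p u * p v)) := by
  have h1 : ∑ u, ∑ v, A u v * (p v * p v) = ∑ u, (∑ v, A u v) * (p u * p u) := by
    rw [sum_comm]
    refine sum_congr rfl fun u _ => ?_
    rw [sum_mul]
    exact sum_congr rfl fun v _ => by rw [hA.apply]
  have h2 : ∀ u v, A u v * (p u + s * p v) ^ 2 =
      A u v * (p u * p u) + A u v * (p v * p v) + 2 * s * (A u v * (p u * p v)) := by
    intro u v
    linear_combination A u v * p v ^ 2 * hs
  simp_rw [h2, sum_add_distrib, h1, ← mul_sum, sum_mul]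
  ring

theorem sum_mul_abs_mul_le_sqrt {V : Type*} [Fintype V] (A : Matrix V V ℝ)
    (hA : ∀ u v, 0 ≤ A u v) (x y : V → V → ℝ) :
    ∑ u, ∑ v, A u v * (|x u v| * |y u v|) ≤
      √((∑ u, ∑ v, A u v * x u v ^ 2) * ∑ u, ∑ v, A u v * y u v ^ 2) := by
  apply Real.le_sqrt_of_sq_le
  simp_rw [← Fintype.sum_prod_type']
  refine le_trans (le_of_eq ?_) ((sum_mul_sq_le_sq_mul_sq univ
    (fun z : V × V => √(A z.1 z.2) * |x z.1 z.2|)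
    (fun z : V × V => √(A z.1 z.2) * |y z.1 z.2|)).trans (le_of_eq ?_))
  · congr 1
    refine sum_congr rfl fun z _ => ?_
    linear_combination (-(|x z.1 z.2| * |y z.1 z.2|)) * Real.mul_self_sqrt (hA z.1 z.2)
  · simp_rw [mul_pow, Real.sq_sqrt (hA _ _), sq_abs]

/-- If `D⁻¹A` has spectrum `μ`, there is an eigenbasis of `D⁻¹A` that is orthonormal for the inner
product weighted by `D`. -/
theorem exists_weighted_eigenbasis {V : Type*} [Fintype V] (A : Matrix V V ℝ) (hA : A.IsSymm)
    (d : V → ℝ) (hd : ∀ u, 0 < d u) (μ : Fin (Fintype.card V) → ℝ)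
    (hanti : Antitone μ)
    (hchar : (Matrix.diagonal (fun u => (d u)⁻¹) * A).charpoly = ∏ i, (X - C (μ i))) :
    ∃ b : Fin (Fintype.card V) → V → ℝ,
      (∀ i j, ∑ u, d u * (b i u * b j u) = if i = j then 1 else 0) ∧
      (∀ i u, ∑ v, A u v * b i v = μ i * (d u * b i u)) ∧
      ∀ p q : V → ℝ, ∑ u, d u * (p u * q u) =
        ∑ i, (∑ u, d u * (p u * b i u)) * ∑ u, d u * (q u * b i u) := by
  set R : Matrix V V ℝ := Matrix.diagonal fun u => (√(d u))⁻¹ with hR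
  have hsq : ∀ u, √(d u) * √(d u) = d u := fun u => Real.mul_self_sqrt (hd u).le
  have hpos : ∀ u, 0 < √(d u) := fun u => Real.sqrt_pos.2 (hd u)
  have hN : (R * A * R).IsHermitian := by
    rw [Matrix.IsHermitian, Matrix.conjTranspose_eq_transpose_of_trivial, Matrix.transpose_mul,
      Matrix.transpose_mul, hA.eq, hR, Matrix.diagonal_transpose, Matrix.mul_assoc]
  have hNchar : (R * A * R).charpoly = ∏ i, (X - C (μ i)) := by
    rw [← hchar, Matrix.charpoly_mul_comm, ← Matrix.mul_assoc, hR, Matrix.diagonal_mul_diagonal]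
    simp_rw [← mul_inv, hsq]
  have hμ : hN.eigenvalues₀ = μ := by
    rw [← List.ofFn_inj, ← hN.sort_roots_charpoly_eq_eigenvalues₀, hNchar,
      Polynomial.roots_prod _ _ (by simp [prod_ne_zero_iff, X_sub_C_ne_zero])]
    simp only [roots_X_sub_C, Multiset.bind_singleton, Fin.univ_val_map, Multiset.map_coe,
      List.map_ofFn, Function.comp_def, RCLike.re_to_real, Multiset.coe_sort]
    apply List.mergeSort_of_pairwise
    simp_rw [decide_eq_true_eq, ← List.sortedGE_iff_pairwise]
    exact hanti.sortedGE_ofFn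
  set e : Fin (Fintype.card V) ≃ V := Fintype.equivOfCardEq (Fintype.card_fin _) with he
  have hev : ∀ i, hN.eigenvalues (e i) = μ i := fun i => by
    rw [← hμ, Matrix.IsHermitian.eigenvalues, he, Equiv.symm_apply_apply]
  set B := hN.eigenvectorBasis.reindex e.symm with hB
  have hinner : ∀ x y : EuclideanSpace ℝ V, inner ℝ x y = ∑ u, x u * y u := by
    intro x y
    simp [PiLp.inner_apply, mul_comm]
  have hcoef : ∀ (p : V → ℝ) i, inner ℝ (WithLp.toLp 2 fun u => √(d u) * p u) (B i) =
      ∑ u, d u * (p u * (B i u / √(d u))) := by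
    intro p i
    rw [hinner]
    refine sum_congr rfl fun u _ => ?_
    have h := div_mul_cancel₀ (B i u) (hpos u).ne'
    linear_combination (-(√(d u) * p u)) * h + p u * (B i u / √(d u)) * hsq u
  refine ⟨fun i u => B i u / √(d u), fun i j => ?_, fun i u => ?_, fun p q => ?_⟩
  · rw [← orthonormal_iff_ite.1 B.orthonormal i j, hinner]
    refine sum_congr rfl fun u _ => ?_
    have := (hpos u).ne'
    rw [← hsq u]
    field_simp
  · have h := congrFun (hN.mulVec_eigenvectorBasis (e i)) u
    rw [hev] at h
    have hBi : B i = hN.eigenvectorBasis (e i) := by simp [hB]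
    rw [← hBi] at h
    simp only [Matrix.mulVec, dotProduct, hR, Matrix.mul_diagonal, Matrix.diagonal_mul,
      Pi.smul_apply, smul_eq_mul] at h
    have := (hpos u).ne'
    calc ∑ v, A u v * (B i v / √(d v))
        = √(d u) * ∑ v, (√(d u))⁻¹ * A u v * (√(d v))⁻¹ * B i v := by
          rw [mul_sum]
          refine sum_congr rfl fun v _ => ?_
          have := (hpos v).ne'
          field_simp
      _ = μ i * (d u * (B i u / √(d u))) := by
          rw [h]
          nth_rw 2 [← hsq u]
          field_simp
  · simp_rw [← hcoef]
    have := B.sum_inner_mul_inner (WithLp.toLp 2 fun u => √(d u) * p u)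
      (WithLp.toLp 2 fun u => √(d u) * q u)
    simp_rw [real_inner_comm _ (B _)] at this ⊢
    rw [this, hinner]
    refine sum_congr rfl fun u _ => ?_
    change _ = √(d u) * p u * (√(d u) * q u)
    linear_combination (-(p u * q u)) * hsq u

/-- The signed edge energy of a normalized eigenvector of `D⁻¹A`. -/
theorem energy_eigenvector {V : Type*} [Fintype V] (A : Matrix V V ℝ) (hA : A.IsSymm)
    (b : V → ℝ) (μ : ℝ) (hnorm : ∑ u, (∑ v, A u v) * (b u * b u) = 1)
    (heig : ∀ u, ∑ v, A u v * b v = μ * ((∑ v, A u v) * b u)) (s : ℝ) (hs : s ^ 2 = 1) :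
    ∑ u, ∑ v, A u v * (b u + s * b v) ^ 2 = 2 * (1 + s * μ) := by
  have h : ∑ u, ∑ v, A u v * (b u * b v) = μ := by
    rw [← mul_one μ, ← hnorm, mul_sum]
    refine sum_congr rfl fun u _ => ?_
    rw [show ∑ v, A u v * (b u * b v) = b u * ∑ v, A u v * b v by
      rw [mul_sum]; exact sum_congr rfl fun v _ => by ring, heig]
    ring
  rw [sum_mul_add_sq A hA b s hs, hnorm, h]

/-- Two nonnegative unit functions of small Dirichlet energy have large inner product. -/
theorem inner_ge_of_energy_le {V ι : Type*} [Fintype V] [Nonempty V] [Fintype ι]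
    (A : Matrix V V ℝ) (hA : A.IsSymm)
    (d : V → ℝ) (hd : ∀ u, 0 < d u) (hdA : ∀ u, ∑ v, A u v = d u)
    (b : ι → V → ℝ) (μ : ι → ℝ)
    (heig : ∀ i u, ∑ v, A u v * b i v = μ i * (d u * b i u))
    (hpars : ∀ p q : V → ℝ, ∑ u, d u * (p u * q u) =
        ∑ i, (∑ u, d u * (p u * b i u)) * ∑ u, d u * (q u * b i u))
    (i₀ : ι) (hi₀ : μ i₀ = 1) (a : ℝ) (ha : 0 < a) (hgap : ∀ i ≠ i₀, a ≤ 1 - μ i)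
    (p q : V → ℝ) (hp : ∀ u, 0 ≤ p u) (hq : ∀ u, 0 ≤ q u)
    (hp1 : ∑ u, d u * (p u * p u) = 1) (hq1 : ∑ u, d u * (q u * q u) = 1)
    (ε : ℝ) (hpε : ∑ u, ∑ v, A u v * (p u - p v) ^ 2 ≤ 2 * ε)
    (hqε : ∑ u, ∑ v, A u v * (q u - q v) ^ 2 ≤ 2 * ε) :
    1 - 2 * (ε / a) ≤ ∑ u, d u * (p u * q u) := by
  have hA_form : ∀ f : V → ℝ, ∀ i,
      ∑ u, d u * ((∑ v, A u v * f v) / d u * b i u) = μ i * ∑ u, d u * (f u * b i u) := by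
    intro f i
    calc ∑ u, d u * ((∑ v, A u v * f v) / d u * b i u)
        = ∑ u, ∑ v, A u v * f v * b i u := by
          refine sum_congr rfl fun u _ => ?_
          have := (hd u).ne'
          rw [← sum_mul]
          field_simp
      _ = ∑ v, f v * ∑ u, A v u * b i u := by
          rw [sum_comm]
          refine sum_congr rfl fun v _ => ?_
          rw [mul_sum]
          refine sum_congr rfl fun u _ => ?_
          rw [hA.apply]
          ring
      _ = _ := by
          rw [mul_sum]
          refine sum_congr rfl fun v _ => ?_
          rw [heig]
          ring
  have hproj : ∀ f : V → ℝ, ∑ u, d u * (f u * f u) = 1 →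
      ∑ u, ∑ v, A u v * (f u - f v) ^ 2 ≤ 2 * ε →
      1 - ε / a ≤ (∑ u, d u * (f u * b i₀ u)) ^ 2 := by
    intro f hf hfε
    have hquad : ∑ u, ∑ v, A u v * (f u * f v) =
        ∑ i, μ i * (∑ u, d u * (f u * b i u)) ^ 2 := by
      have := hpars f fun u => (∑ v, A u v * f v) / d u
      simp_rw [hA_form] at this
      rw [show ∑ i, μ i * (∑ u, d u * (f u * b i u)) ^ 2 = ∑ i,
        (∑ u, d u * (f u * b i u)) * (μ i * ∑ u, d u * (f u * b i u)) from
        sum_congr rfl fun i _ => by ring, ← this]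
      refine sum_congr rfl fun u _ => ?_
      have := (hd u).ne'
      rw [show ∑ v, A u v * (f u * f v) = f u * ∑ v, A u v * f v by
        rw [mul_sum]; exact sum_congr rfl fun v _ => by ring]
      field_simp
    have hen := sum_mul_add_sq A hA f (-1) (by norm_num)
    simp only [hdA, hf, hquad, neg_one_mul, ← sub_eq_add_neg] at hen
    have hone : ∑ i, (∑ u, d u * (f u * b i u)) ^ 2 = 1 := by
      rw [← hf, hpars f f]
      exact sum_congr rfl fun i _ => sq _
    have hle : a * (1 - (∑ u, d u * (f u * b i₀ u)) ^ 2) ≤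
        1 - ∑ i, μ i * (∑ u, d u * (f u * b i u)) ^ 2 := by
      rw [← hone, ← sum_sub_distrib, ← add_sum_erase univ _ (mem_univ i₀),
        ← add_sum_erase univ (fun i => _ - _) (mem_univ i₀), hi₀, add_sub_cancel_left, one_mul,
        sub_self, zero_add, mul_sum]
      refine sum_le_sum fun i hi => ?_
      nlinarith [hgap i (ne_of_mem_erase hi), sq_nonneg (∑ u, d u * (f u * b i u))]
    have : 1 - (∑ u, d u * (f u * b i₀ u)) ^ 2 ≤ ε / a := by
      rw [le_div_iff₀ ha]
      linarith
    linarith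
  have hP := hproj p hp1 hpε
  have hQ := hproj q hq1 hqε
  have hconst : ∀ i ≠ i₀, ∑ u, d u * (1 * b i u) = 0 := by
    intro i hi
    have h := hA_form (fun _ => 1) i
    simp only [mul_one, hdA, div_self (hd _).ne'] at h
    have := hgap i hi
    have h' : (1 - μ i) * ∑ u, d u * (1 * b i u) = 0 := by linarith
    exact (mul_eq_zero.1 h').resolve_left (by linarith)
  have hmean : ∀ f : V → ℝ, ∑ u, d u * (f u * 1) =
      (∑ u, d u * (f u * b i₀ u)) * ∑ u, d u * (1 * b i₀ u) := by
    intro f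
    rw [hpars f fun _ => 1, sum_eq_single i₀ (fun i _ hi => by rw [hconst i hi, mul_zero])
      (by simp)]
  have hvol : 0 < (∑ u, d u * (1 * b i₀ u)) * ∑ u, d u * (1 * b i₀ u) := by
    rw [← hmean fun _ => 1]
    exact sum_pos (fun u _ => by simpa using hd u) univ_nonempty
  have hmp : 0 ≤ (∑ u, d u * (p u * b i₀ u)) * ∑ u, d u * (1 * b i₀ u) := by
    rw [← hmean p]
    exact sum_nonneg fun u _ => mul_nonneg (hd u).le (by simpa using hp u)
  have hmq : 0 ≤ (∑ u, d u * (q u * b i₀ u)) * ∑ u, d u * (1 * b i₀ u) := by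
    rw [← hmean q]
    exact sum_nonneg fun u _ => mul_nonneg (hd u).le (by simpa using hq u)
  have hpq0 : 0 ≤ ∑ u, d u * (p u * q u) :=
    sum_nonneg fun u _ => mul_nonneg (hd u).le (mul_nonneg (hp u) (hq u))
  have hrest : (∑ u, d u * (p u * b i₀ u)) * (∑ u, d u * (q u * b i₀ u)) - 1 +
      ((∑ u, d u * (p u * b i₀ u)) ^ 2 + (∑ u, d u * (q u * b i₀ u)) ^ 2) / 2 ≤
      ∑ u, d u * (p u * q u) := by
    have h1 := hpars p p
    have h2 := hpars q q
    have h3 := hpars p q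
    rw [hp1, ← add_sum_erase univ _ (mem_univ i₀)] at h1
    rw [hq1, ← add_sum_erase univ _ (mem_univ i₀)] at h2
    rw [← add_sum_erase univ _ (mem_univ i₀)] at h3
    have h4 : 0 ≤ ∑ i ∈ univ.erase i₀,
        (∑ u, d u * (p u * b i u) + ∑ u, d u * (q u * b i u)) ^ 2 :=
      sum_nonneg fun i _ => sq_nonneg _
    have h5 : ∀ x y : ℝ, (x + y) ^ 2 = x * x + 2 * (x * y) + y * y := fun x y => by ring
    simp_rw [h5, sum_add_distrib, ← mul_sum] at h4
    nlinarith
  generalize ∑ u, d u * (p u * b i₀ u) = x at *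
  generalize ∑ u, d u * (q u * b i₀ u) = y at *
  generalize ∑ u, d u * (1 * b i₀ u) = k at *
  rcases le_or_gt (ε / a) 1 with hδ | hδ
  · have hxy : 0 ≤ x * y := by
      refine nonneg_of_mul_nonneg_left (b := k * k) ?_ hvol
      nlinarith [mul_nonneg hmp hmq]
    have : 1 - ε / a ≤ x * y := by
      refine le_of_sq_le_sq ?_ hxy
      rw [mul_pow, sq (1 - ε / a)]
      exact mul_le_mul hP hQ (by linarith) (sq_nonneg x)
    linarith
  · linarith

/-- Solving `h (1 - 2ε/a) ≤ 2 √(2ε)` for `ε`. -/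
theorem div_mul_sqrt_sub_one_sq_le {a h ε : ℝ} (ha : 0 ≤ a) (hh : 0 ≤ h) (hε : 0 ≤ ε)
    (H : 0 < a → h * (1 - 2 * (ε / a)) ≤ 2 * √(2 * ε)) :
    a ^ 2 / (2 * h ^ 2) * (√(1 + h ^ 2 / a) - 1) ^ 2 ≤ ε := by
  rcases ha.eq_or_lt with rfl | ha
  · simpa using hε
  rcases hh.eq_or_lt with rfl | hh
  · simpa using hε
  have H := H ha
  have hr : √(2 * ε) * √(2 * ε) = 2 * ε := Real.mul_self_sqrt (by linarith)
  have hr0 := Real.sqrt_nonneg (2 * ε)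
  have h1 : √(1 + h ^ 2 / a) - 1 ≤ √(2 * ε) * h / a := by
    rw [sub_le_iff_le_add, Real.sqrt_le_left (by positivity)]
    have : h * (h * (1 - 2 * (ε / a))) / a ≤ h * (2 * √(2 * ε)) / a := by gcongr
    have e1 : (√(2 * ε) * h / a + 1) ^ 2 =
        (√(2 * ε) * √(2 * ε)) * h ^ 2 / a ^ 2 + h * (2 * √(2 * ε)) / a + 1 := by
      field_simp
      ring
    have e2 : h * (h * (1 - 2 * (ε / a))) / a = h ^ 2 / a - 2 * ε * h ^ 2 / a ^ 2 := by
      field_simp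
    rw [e1, hr]
    linarith
  have h0 : 0 ≤ √(1 + h ^ 2 / a) - 1 := by
    rw [sub_nonneg, Real.one_le_sqrt]
    have : 0 ≤ h ^ 2 / a := by positivity
    linarith
  calc a ^ 2 / (2 * h ^ 2) * (√(1 + h ^ 2 / a) - 1) ^ 2
      ≤ a ^ 2 / (2 * h ^ 2) * (√(2 * ε) * h / a) ^ 2 := by gcongr
    _ = √(2 * ε) * √(2 * ε) / 2 := by field_simp
    _ = ε := by rw [hr]; ring

theorem sum_adjMatrix_row {V : Type*} [Fintype V] (G : SimpleGraph V) (u : V) :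
    ∑ v, G.adjMatrix ℝ u v = G.degree u := by
  simp [SimpleGraph.adjMatrix_apply, ← SimpleGraph.card_neighborFinset_eq_degree,
    SimpleGraph.neighborFinset_eq_filter]

theorem bdry_nonneg {V : Type*} [Fintype V] (G : SimpleGraph V) (S : Finset V) :
    0 ≤ bdry G S :=
  sum_nonneg fun _ _ => sum_nonneg fun _ _ => by split_ifs <;> norm_num

theorem vol_nonneg {V : Type*} [Fintype V] (G : SimpleGraph V) (S : Finset V) :
    0 ≤ vol G S :=
  sum_nonneg fun _ _ => Nat.cast_nonneg _

theorem cheeger_nonneg {V : Type*} [Fintype V] (G : SimpleGraph V) : 0 ≤ cheeger G := by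
  refine Real.sInf_nonneg ?_
  rintro x ⟨S, -, -, rfl⟩
  exact div_nonneg (bdry_nonneg G S) (le_min (vol_nonneg G S) (vol_nonneg G Sᶜ))

theorem cheeger_mul_vol_mul_vol_compl_le {V : Type*} [Fintype V] (G : SimpleGraph V)
    (hdeg : ∀ u, 0 < (G.degree u : ℝ)) (S : Finset V) :
    cheeger G * (vol G S * vol G Sᶜ) ≤ vol G univ * bdry G S := by
  rcases S.eq_empty_or_nonempty with rfl | hS
  · simp [vol, bdry]
  by_cases hS' : S = univ
  · simp [hS', vol, bdry]
  have hadd : vol G S + vol G Sᶜ = vol G univ := sum_add_sum_compl S _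
  have hpos : 0 < vol G S := sum_pos (fun u _ => hdeg u) hS
  have hpos' : 0 < vol G Sᶜ :=
    sum_pos (fun u _ => hdeg u) (nonempty_iff_ne_empty.2 fun h => hS' (by simpa using h))
  have hle : cheeger G ≤ bdry G S / min (vol G S) (vol G Sᶜ) := by
    refine csInf_le ⟨0, ?_⟩ ⟨S, hS, hS', rfl⟩
    rintro x ⟨T, -, -, rfl⟩
    exact div_nonneg (bdry_nonneg G T) (le_min (vol_nonneg G T) (vol_nonneg G Tᶜ))
  rw [le_div_iff₀ (lt_min hpos hpos')] at hle
  calc cheeger G * (vol G S * vol G Sᶜ)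
      = cheeger G * min (vol G S) (vol G Sᶜ) * max (vol G S) (vol G Sᶜ) := by
        rw [mul_assoc, min_mul_max]
    _ ≤ bdry G S * vol G univ :=
        mul_le_mul hle (max_le (by linarith) (by linarith)) (hpos.le.trans (le_max_left _ _))
          (bdry_nonneg G S)
    _ = _ := mul_comm _ _

/-- The `L¹` Cheeger inequality for functions of mean zero. -/
theorem cheeger_mul_sum_abs_le {V : Type*} [Fintype V] [Nonempty V] (G : SimpleGraph V)
    (hdeg : ∀ u, 0 < (G.degree u : ℝ)) (φ : V → ℝ) (hφ : ∑ u, (G.degree u : ℝ) * φ u = 0) :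
    cheeger G * ∑ u, (G.degree u : ℝ) * |φ u| ≤
      ∑ u, ∑ v, G.adjMatrix ℝ u v * |φ u - φ v| := by
  have hW : 0 < vol G univ := sum_pos (fun u _ => hdeg u) univ_nonempty
  have hcut := sum_mul_abs_sub_nonneg
    (fun u v => vol G univ * G.adjMatrix ℝ u v - cheeger G * ((G.degree u : ℝ) * G.degree v))
    (fun u v => by
      rw [mul_comm (G.degree u : ℝ), (G.isSymm_adjMatrix (α := ℝ)).apply])
    (fun S => by
      have h := cheeger_mul_vol_mul_vol_compl_le G hdeg S
      simp_rw [sum_sub_distrib, ← mul_sum, ← sum_mul]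
      simpa [vol, bdry, SimpleGraph.adjMatrix_apply] using h) φ
  simp_rw [sub_mul, sum_sub_distrib, mul_assoc, ← mul_sum, sub_nonneg] at hcut
  have hmean : vol G univ * ∑ u, (G.degree u : ℝ) * |φ u| ≤
      ∑ u, (G.degree u : ℝ) * ∑ v, (G.degree v : ℝ) * |φ u - φ v| := by
    rw [mul_sum]
    refine sum_le_sum fun u _ => ?_
    rw [mul_left_comm]
    refine mul_le_mul_of_nonneg_left ?_ (hdeg u).le
    calc vol G univ * |φ u| = |∑ v, (G.degree v : ℝ) * (φ u - φ v)| := by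
          simp_rw [mul_sub, sum_sub_distrib, hφ, ← sum_mul, sub_zero, abs_mul]
          rw [← vol, abs_of_pos hW]
      _ ≤ ∑ v, |(G.degree v : ℝ) * (φ u - φ v)| := abs_sum_le_sum_abs _ _
      _ = _ := sum_congr rfl fun v _ => by rw [abs_mul, abs_of_pos (hdeg v)]
  refine le_of_mul_le_mul_left ?_ hW
  rw [mul_left_comm]
  exact (mul_le_mul_of_nonneg_left hmean (cheeger_nonneg G)).trans hcut

/-- The total variation of a product of two functions along edges. -/
theorem sum_mul_abs_mul_sub_mul_le {V : Type*} [Fintype V] (A : Matrix V V ℝ)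
    (hA : ∀ u v, 0 ≤ A u v) (f g : V → ℝ) (ε : ℝ) (hε : 0 ≤ ε)
    (hf : ∑ u, ∑ v, A u v * (f u + f v) ^ 2 ≤ 2 * ε)
    (hg : ∑ u, ∑ v, A u v * (g u + g v) ^ 2 ≤ 2 * ε)
    (hf' : ∑ u, ∑ v, A u v * (f u - f v) ^ 2 ≤ 4)
    (hg' : ∑ u, ∑ v, A u v * (g u - g v) ^ 2 ≤ 4) :
    ∑ u, ∑ v, A u v * |f u * g u - f v * g v| ≤ 2 * √(2 * ε) := by
  have hbound : ∀ p q : V → ℝ, ∑ u, ∑ v, A u v * (p u + p v) ^ 2 ≤ 2 * ε →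
      ∑ u, ∑ v, A u v * (q u - q v) ^ 2 ≤ 4 →
      ∑ u, ∑ v, A u v * (|p u + p v| * |q u - q v|) ≤ 2 * √(2 * ε) := by
    intro p q hp hq
    refine (sum_mul_abs_mul_le_sqrt A hA _ _).trans ?_
    refine (Real.sqrt_le_sqrt (mul_le_mul hp hq ?_ (by linarith))).trans (le_of_eq ?_)
    · exact sum_nonneg fun u _ => sum_nonneg fun v _ => mul_nonneg (hA u v) (sq_nonneg _)
    · rw [mul_comm, Real.sqrt_mul (by norm_num),
        show (4 : ℝ) = 2 ^ 2 by norm_num, Real.sqrt_sq (by norm_num)]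
  have hpt : ∑ u, ∑ v, A u v * |f u * g u - f v * g v| ≤
      ∑ u, ∑ v, (A u v * (|f u + f v| * |g u - g v|) / 2 +
        A u v * (|g u + g v| * |f u - f v|) / 2) := by
    refine sum_le_sum fun u _ => sum_le_sum fun v _ => ?_
    rw [mul_div_assoc (A u v), mul_div_assoc (A u v), ← mul_add]
    refine mul_le_mul_of_nonneg_left ?_ (hA u v)
    rw [show f u * g u - f v * g v =
      (f u + f v) * (g u - g v) / 2 + (g u + g v) * (f u - f v) / 2 by ring]
    refine (abs_add_le _ _).trans (le_of_eq ?_)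
    simp [abs_div, abs_mul]
  simp_rw [sum_add_distrib, ← sum_div] at hpt
  have hsum := add_le_add (hbound f g hf hg') (hbound g f hg hf')
  linarith

/-- **Theorem 1**: for a finite connected graph with normalized adjacency eigenvalues
`μs (n-1) = μₙ ≤ ⋯ ≤ μs 1 = μ₂ ≤ μs 0 = μ₁ = 1` (listed with multiplicity, in
decreasing order, as the roots of the characteristic polynomial of `D⁻¹A`) and
edge-expansion `h`, one has
`1 + μ_{n-1} ≥ ((1-μ₂)²/(2h²)) · (√(1 + h²/(1-μ₂)) - 1)²`. -/
theorem one_add_secondSmallest_ge {V : Type*} [Fintype V] (G : SimpleGraph V)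
    (hconn : G.Connected) (hn : 2 ≤ Fintype.card V)
    (μs : Fin (Fintype.card V) → ℝ) (hanti : Antitone μs)
    (hchar : (normAdj G).charpoly = ∏ i, (X - C (μs i)))
    (hμ1 : μs ⟨0, by omega⟩ = 1) :
    1 + μs ⟨Fintype.card V - 2, by omega⟩ ≥
      (1 - μs ⟨1, by omega⟩) ^ 2 / (2 * cheeger G ^ 2) *
        (Real.sqrt (1 + cheeger G ^ 2 / (1 - μs ⟨1, by omega⟩)) - 1) ^ 2 := by
  have : Nontrivial V := Fintype.one_lt_card_iff_nontrivial.1 hn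
  have hdeg : ∀ u, 0 < (G.degree u : ℝ) := fun u =>
    Nat.cast_pos.2 (hconn.preconnected.degree_pos_of_nontrivial u)
  have hsymm : (G.adjMatrix ℝ).IsSymm := G.isSymm_adjMatrix
  have hnonneg : ∀ u v, 0 ≤ G.adjMatrix ℝ u v := fun u v => by
    rw [SimpleGraph.adjMatrix_apply]
    split_ifs <;> norm_num
  have hrow := sum_adjMatrix_row G
  have hnormAdj : normAdj G = Matrix.diagonal (fun u => (G.degree u : ℝ)⁻¹) * G.adjMatrix ℝ := by
    ext u v
    rw [Matrix.diagonal_mul]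
    simp [normAdj, SimpleGraph.adjMatrix_apply]
  rw [hnormAdj] at hchar
  obtain ⟨b, horth, heig, hpars⟩ := exists_weighted_eigenbasis (G.adjMatrix ℝ) hsymm
    (fun u => (G.degree u : ℝ)) hdeg μs hanti hchar
  have hnorm : ∀ i, ∑ u, (G.degree u : ℝ) * (b i u * b i u) = 1 := fun i => by simp [horth]
  have henergy : ∀ i, ∀ s : ℝ, s ^ 2 = 1 →
      ∑ u, ∑ v, G.adjMatrix ℝ u v * (b i u + s * b i v) ^ 2 = 2 * (1 + s * μs i) :=
    fun i => energy_eigenvector _ hsymm _ _ (by simpa only [hrow] using hnorm i)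
      (by simpa only [hrow] using heig i)
  have hplus : ∀ i, ∑ u, ∑ v, G.adjMatrix ℝ u v * (b i u + b i v) ^ 2 = 2 * (1 + μs i) :=
    fun i => by simpa using henergy i 1 (by norm_num)
  have hminus : ∀ i, ∑ u, ∑ v, G.adjMatrix ℝ u v * (b i u - b i v) ^ 2 = 2 * (1 - μs i) :=
    fun i => by simpa [← sub_eq_add_neg] using henergy i (-1) (by norm_num)
  have hlow : ∀ i, 0 ≤ 1 + μs i := fun i => by
    have h : 0 ≤ ∑ u, ∑ v, G.adjMatrix ℝ u v * (b i u + b i v) ^ 2 :=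
      sum_nonneg fun u _ => sum_nonneg fun v _ => mul_nonneg (hnonneg u v) (sq_nonneg _)
    linarith [hplus i]
  set i₁ : Fin (Fintype.card V) := ⟨1, by omega⟩ with hi₁
  set j : Fin (Fintype.card V) := ⟨Fintype.card V - 2, by omega⟩ with hj
  set k : Fin (Fintype.card V) := ⟨Fintype.card V - 1, by omega⟩ with hk
  have hkj : μs k ≤ μs j := hanti (Fin.mk_le_mk.2 (by omega))
  have habs : ∀ i, μs i ≤ μs j →
      ∑ u, ∑ v, G.adjMatrix ℝ u v * (|b i u| - |b i v|) ^ 2 ≤ 2 * (1 + μs j) := by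
    intro i hi
    refine le_trans ?_ ((hplus i).trans_le (by linarith))
    refine sum_le_sum fun u _ => sum_le_sum fun v _ =>
      mul_le_mul_of_nonneg_left ?_ (hnonneg u v)
    rw [sq_le_sq, ← abs_neg (b i v)]
    simpa using abs_abs_sub_abs_le_abs_sub (b i u) (-b i v)
  refine div_mul_sqrt_sub_one_sq_le ?_ (cheeger_nonneg G) (hlow j) fun ha => ?_
  · rw [sub_nonneg, ← hμ1]
    exact hanti (Fin.mk_le_mk.2 (by omega))
  have hinner := inner_ge_of_energy_le (G.adjMatrix ℝ) hsymm (fun u => (G.degree u : ℝ)) hdeg hrow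
    b μs heig hpars ⟨0, by omega⟩ hμ1 (1 - μs i₁) ha
    (fun i hi => sub_le_sub_left (hanti (Fin.mk_le_mk.2 (by
      have : i.val ≠ 0 := fun h => hi (Fin.ext h)
      omega))) 1)
    (fun u => |b j u|) (fun u => |b k u|) (fun u => abs_nonneg _) (fun u => abs_nonneg _)
    (by simpa only [abs_mul_abs_self] using hnorm j)
    (by simpa only [abs_mul_abs_self] using hnorm k) (1 + μs j) (habs j le_rfl) (habs k hkj)
  have hcheeger := cheeger_mul_sum_abs_le G hdeg (fun u => b j u * b k u) (by
    rw [horth, if_neg]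
    intro h
    have := congrArg Fin.val h
    simp only [hj, hk] at this
    omega)
  simp only [abs_mul] at hcheeger
  calc cheeger G * (1 - 2 * ((1 + μs j) / (1 - μs i₁)))
      ≤ cheeger G * ∑ u, (G.degree u : ℝ) * (|b j u| * |b k u|) :=
        mul_le_mul_of_nonneg_left hinner (cheeger_nonneg G)
    _ ≤ _ := hcheeger
    _ ≤ 2 * √(2 * (1 + μs j)) :=
        sum_mul_abs_mul_sub_mul_le (G.adjMatrix ℝ) hnonneg (b j) (b k) (1 + μs j) (hlow j)
          (hplus j).le ((hplus k).trans_le (by linarith))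
          ((hminus j).trans_le (by linarith [hlow j]))
          ((hminus k).trans_le (by linarith [hlow k]))

end
end

section
/- Let G=(V,E) be a finite, connected, non-bipartite, vertex-transitive graph of degree d, with normalized adjacency eigenvalues μ_n ≤ … ≤ μ_2 ≤ μ_1 = 1. Then 1 + μ_n ≥ min{ 2/d, 2(√(1 + (1−μ_2)/4) − 1)^2 }. -/
open Finset Polynomial

noncomputable section
open scoped Classical

/-- A graph is vertex-transitive if its automorphism group acts transitively on vertices. -/
def VertexTransitive {V : Type*} (G : SimpleGraph V) : Prop :=
  ∀ u v : V, ∃ φ : G ≃g G, φ u = v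

/-- The characteristic polynomial of a real Hermitian matrix determines its sorted eigenvalues. -/
theorem eigenvalues₀_eq_of_charpoly_eq {V : Type*} [Fintype V] [DecidableEq V]
    {A : Matrix V V ℝ} (hA : A.IsHermitian) {μs : Fin (Fintype.card V) → ℝ}
    (hanti : Antitone μs) (hchar : A.charpoly = ∏ i, (X - C (μs i))) :
    hA.eigenvalues₀ = μs := by
  have hroots := hA.roots_charpoly_eq_eigenvalues₀
  rw [hchar, Polynomial.roots_prod _ _ (by
    simp [Finset.prod_ne_zero_iff, Polynomial.X_sub_C_ne_zero])] at hroots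
  simp only [roots_X_sub_C, Multiset.bind_singleton, Fin.univ_val_map, Multiset.coe_eq_coe]
    at hroots
  exact List.ofFn_injective (List.Perm.eq_of_sortedGE hA.eigenvalues₀_antitone.sortedGE_ofFn
    hanti.sortedGE_ofFn hroots.symm)

/-- The Rayleigh quotient of `v` is at most any bound on the eigenvalues whose eigenvectors are not
orthogonal to `v`. -/
theorem dotProduct_mulVec_le_of_eigenvalues_le {V : Type*} [Fintype V] [DecidableEq V]
    {A : Matrix V V ℝ} (hA : A.IsHermitian) {m : ℝ} {v : V → ℝ}
    (hm : ∀ i, ⇑(hA.eigenvectorBasis i) ⬝ᵥ v ≠ 0 → hA.eigenvalues i ≤ m) :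
    v ⬝ᵥ A.mulVec v ≤ m * (v ⬝ᵥ v) := by
  set b := hA.eigenvectorBasis
  have parseval : ∀ w : V → ℝ, v ⬝ᵥ w = ∑ i, (⇑(b i) ⬝ᵥ v) * (⇑(b i) ⬝ᵥ w) := by
    intro w
    have h := b.sum_inner_mul_inner (WithLp.toLp 2 v) (WithLp.toLp 2 w)
    simp only [PiLp.inner_apply, RCLike.inner_apply, conj_trivial] at h
    simp only [dotProduct]
    convert h.symm using 1 <;> simp [mul_comm]
  have hAv : ∀ i, ⇑(b i) ⬝ᵥ A.mulVec v = hA.eigenvalues i * (⇑(b i) ⬝ᵥ v) := by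
    intro i
    rw [Matrix.dotProduct_mulVec, ← Matrix.mulVec_transpose,
      Matrix.isHermitian_iff_isSymm.1 hA, hA.mulVec_eigenvectorBasis, smul_dotProduct,
      smul_eq_mul]
  rw [parseval, parseval v, Finset.mul_sum]
  refine Finset.sum_le_sum fun i _ => ?_
  rw [hAv]
  by_cases hi : ⇑(b i) ⬝ᵥ v = 0
  · simp [hi]
  · nlinarith [hm i hi, mul_self_nonneg (⇑(b i) ⬝ᵥ v)]

/-- If a Hermitian matrix fixes the constants and all its eigenvalues but one are at most `m ≤ 1`,
then its quadratic form is at most `m` on mean-zero vectors. -/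
theorem dotProduct_mulVec_le_of_sum_eq_zero {V : Type*} [Fintype V] [DecidableEq V] [Nonempty V]
    {A : Matrix V V ℝ} (hA : A.IsHermitian) (hone : A.mulVec 1 = 1) {i₀ : V} {m : ℝ}
    (hm : ∀ i, i ≠ i₀ → hA.eigenvalues i ≤ m) (hm1 : m ≤ 1)
    (hle : ∀ i, hA.eigenvalues i ≤ 1) {v : V → ℝ} (hv : ∑ x, v x = 0) :
    v ⬝ᵥ A.mulVec v ≤ m * (v ⬝ᵥ v) := by
  set b : V → ℝ := ⇑(hA.eigenvectorBasis i₀)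
  have hm' : ∀ w : V → ℝ, b ⬝ᵥ w = 0 → w ⬝ᵥ A.mulVec w ≤ m * (w ⬝ᵥ w) := fun w hw =>
    dotProduct_mulVec_le_of_eigenvalues_le hA fun i hi => hm i (by rintro rfl; exact hi hw)
  have hpos : (0 : ℝ) < (1 : V → ℝ) ⬝ᵥ 1 := by simp [dotProduct, Fintype.card_pos]
  have h1v : (1 : V → ℝ) ⬝ᵥ v = 0 := by simpa [dotProduct] using hv
  have hv1 : v ⬝ᵥ 1 = 0 := by simpa [dotProduct] using hv
  have h1Av : (1 : V → ℝ) ⬝ᵥ A.mulVec v = 0 := by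
    rw [Matrix.dotProduct_mulVec, ← Matrix.mulVec_transpose,
      Matrix.isHermitian_iff_isSymm.1 hA, hone, h1v]
  by_cases hb : b ⬝ᵥ 1 = 0
  · have h := hm' 1 hb
    rw [hone] at h
    obtain rfl : m = 1 := le_antisymm hm1 (by nlinarith)
    exact dotProduct_mulVec_le_of_eigenvalues_le hA fun i _ => hle i
  · have h := hm' ((b ⬝ᵥ v) • (1 : V → ℝ) - (b ⬝ᵥ 1) • v) (by
      simp only [dotProduct_sub, dotProduct_smul, smul_eq_mul]; ring)
    simp only [Matrix.mulVec_sub, Matrix.mulVec_smul, hone, dotProduct_sub, sub_dotProduct,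
      smul_dotProduct, dotProduct_smul, smul_eq_mul, h1v, hv1, h1Av] at h
    have hsq : 0 < (b ⬝ᵥ 1) ^ 2 := by positivity
    refine le_of_mul_le_mul_left ?_ hsq
    nlinarith [mul_nonneg (mul_nonneg (sq_nonneg (b ⬝ᵥ v)) hpos.le) (sub_nonneg.2 hm1)]

/-- Coarea principle: an inequality between total variations holds for all functions once it holds
for indicator functions. -/
theorem sum_mul_abs_sub_nonneg_s2 {V : Type*} [Fintype V] (w : V → V → ℝ)
    (hw : ∀ s : V → Prop, 0 ≤ ∑ x, ∑ y, w x y * |(if s x then 1 else 0) - (if s y then 1 else 0)|)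
    (g : V → ℝ) : 0 ≤ ∑ x, ∑ y, w x y * |g x - g y| := by
  have hint : ∀ a b : ℝ, MeasureTheory.Integrable
      (Set.indicator (Set.uIoc a b) (fun _ => (1 : ℝ))) := fun a b =>
    (MeasureTheory.integrable_indicator_iff measurableSet_uIoc).2
      (MeasureTheory.integrableOn_const (by simp [Set.uIoc]))
  have hval : ∀ a b : ℝ, |a - b| = ∫ t, Set.indicator (Set.uIoc a b) (fun _ => (1 : ℝ)) t := by
    intro a b
    rw [MeasureTheory.integral_indicator measurableSet_uIoc]
    simp [Set.uIoc, abs_sub_comm a b, max_sub_min_eq_abs]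
  have hind : ∀ a b t : ℝ, Set.indicator (Set.uIoc a b) (fun _ => (1 : ℝ)) t =
      |(if a < t then 1 else 0) - (if b < t then 1 else 0)| := by
    intro a b t
    simp only [Set.indicator, Set.mem_uIoc]
    grind
  have hsum : ∑ x, ∑ y, w x y * |g x - g y| = ∫ t, ∑ x, ∑ y, w x y *
      Set.indicator (Set.uIoc (g x) (g y)) (fun _ => (1 : ℝ)) t := by
    rw [MeasureTheory.integral_finsetSum _ fun x _ =>
      MeasureTheory.integrable_finsetSum _ fun y _ => (hint _ _).const_mul _]
    refine Finset.sum_congr rfl fun x _ => ?_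
    rw [MeasureTheory.integral_finsetSum _ fun y _ => (hint _ _).const_mul _]
    refine Finset.sum_congr rfl fun y _ => ?_
    rw [MeasureTheory.integral_const_mul, hval]
  rw [hsum]
  refine MeasureTheory.integral_nonneg fun t => ?_
  simp only [hind]
  exact hw fun x => g x < t

/-- The Dirichlet form of a symmetric kernel with unit row sums. -/
theorem sum_mul_sub_sq {V : Type*} [Fintype V] {P : Matrix V V ℝ} (hsymm : P.IsSymm)
    (hrow : ∀ x, ∑ y, P x y = 1) (f : V → ℝ) :
    ∑ x, ∑ y, P x y * (f x - f y) ^ 2 = 2 * (f ⬝ᵥ f - f ⬝ᵥ P.mulVec f) := by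
  have h₁ : ∑ x, ∑ y, P x y * f x ^ 2 = f ⬝ᵥ f := by
    simp only [← Finset.sum_mul, hrow, dotProduct, one_mul, sq]
  have h₂ : ∑ x, ∑ y, P x y * f y ^ 2 = f ⬝ᵥ f := by
    rw [Finset.sum_comm, ← h₁]
    simp only [hsymm.apply]
  have h₃ : ∑ x, ∑ y, P x y * (f x * f y) = f ⬝ᵥ P.mulVec f := by
    simp only [dotProduct, Matrix.mulVec, Finset.mul_sum]
    exact Finset.sum_congr rfl fun x _ => Finset.sum_congr rfl fun y _ => by ring
  calc ∑ x, ∑ y, P x y * (f x - f y) ^ 2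
      = ∑ x, ∑ y, (P x y * f x ^ 2 + P x y * f y ^ 2 - 2 * (P x y * (f x * f y))) :=
        Finset.sum_congr rfl fun x _ => Finset.sum_congr rfl fun y _ => by ring
    _ = 2 * (f ⬝ᵥ f - f ⬝ᵥ P.mulVec f) := by
        simp only [Finset.sum_sub_distrib, Finset.sum_add_distrib, ← Finset.mul_sum, h₁, h₂, h₃]
        ring

/-- The signless Dirichlet form of a symmetric kernel with unit row sums. -/
theorem sum_mul_add_sq_s2 {V : Type*} [Fintype V] {P : Matrix V V ℝ} (hsymm : P.IsSymm)
    (hrow : ∀ x, ∑ y, P x y = 1) (f : V → ℝ) :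
    ∑ x, ∑ y, P x y * (f x + f y) ^ 2 = 2 * (f ⬝ᵥ f + f ⬝ᵥ P.mulVec f) := by
  have h₁ : ∑ x, ∑ y, P x y * f x ^ 2 = f ⬝ᵥ f := by
    simp only [← Finset.sum_mul, hrow, dotProduct, one_mul, sq]
  have h₂ : ∑ x, ∑ y, P x y * (f x + f y) ^ 2 + ∑ x, ∑ y, P x y * (f x - f y) ^ 2 =
      2 * ∑ x, ∑ y, P x y * f x ^ 2 + 2 * ∑ x, ∑ y, P y x * f y ^ 2 := by
    simp only [← Finset.sum_add_distrib, Finset.mul_sum, hsymm.apply]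
    exact Finset.sum_congr rfl fun x _ => Finset.sum_congr rfl fun y _ => by ring
  rw [Finset.sum_comm (f := fun x y => P y x * f y ^ 2), h₁, sum_mul_sub_sq hsymm hrow] at h₂
  linarith

/-- An `L²` spectral gap `l` yields the `L¹` Poincaré inequality with the same constant. -/
theorem gap_mul_sum_abs_le {V : Type*} [Fintype V] [Nonempty V] {P : Matrix V V ℝ}
    (hsymm : P.IsSymm) (hrow : ∀ x, ∑ y, P x y = 1) {l : ℝ} (hl : 0 ≤ l)
    (hgap : ∀ v : V → ℝ, ∑ x, v x = 0 → v ⬝ᵥ P.mulVec v ≤ (1 - l) * (v ⬝ᵥ v))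
    {g : V → ℝ} (hg : ∑ x, g x = 0) :
    l * ∑ x, |g x| ≤ ∑ x, ∑ y, P x y * |g x - g y| := by
  set n : ℝ := (Fintype.card V : ℝ) with hn_def
  have hn : 0 < n := by simp [hn_def, Fintype.card_pos]
  let J : Matrix V V ℝ := Matrix.of fun _ _ => n⁻¹
  have hJsymm : J.IsSymm := by ext; simp [J]
  have hJrow : ∀ x, ∑ y, J x y = 1 := by
    intro x
    simp [J, ← hn_def, hn.ne']
  have hsq : ∀ f : V → ℝ, 0 ≤ ∑ x, ∑ y, (P x y - l * J x y) * (f x - f y) ^ 2 := by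
    intro f
    let v : V → ℝ := fun x => f x - n⁻¹ * ∑ y, f y
    have hv : ∑ x, v x = 0 := by
      simp only [v, Finset.sum_sub_distrib, Finset.sum_const, Finset.card_univ, nsmul_eq_mul,
        ← hn_def]
      field_simp
      ring
    have hJv : J.mulVec v = 0 := by
      ext x
      simp [Matrix.mulVec, dotProduct, J, ← Finset.mul_sum, hv]
    have hfv : ∑ x, ∑ y, (P x y - l * J x y) * (f x - f y) ^ 2 =
        ∑ x, ∑ y, P x y * (v x - v y) ^ 2 - l * ∑ x, ∑ y, J x y * (v x - v y) ^ 2 := by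
      simp only [Finset.mul_sum, ← Finset.sum_sub_distrib, v]
      exact Finset.sum_congr rfl fun x _ => Finset.sum_congr rfl fun y _ => by ring
    rw [hfv, sum_mul_sub_sq hsymm hrow, sum_mul_sub_sq hJsymm hJrow, hJv, dotProduct_zero]
    linarith [hgap v hv]
  have habs := sum_mul_abs_sub_nonneg_s2 (fun x y => P x y - l * J x y) (fun s => by
    refine (hsq fun x => if s x then 1 else 0).trans_eq ?_
    refine Finset.sum_congr rfl fun x _ => Finset.sum_congr rfl fun y _ => ?_
    split_ifs <;> simp) g
  have hJ : ∑ x, |g x| ≤ ∑ x, ∑ y, J x y * |g x - g y| := by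
    refine Finset.sum_le_sum fun x _ => ?_
    have hx : g x = ∑ y, J x y * (g x - g y) := by
      simp only [mul_sub, Finset.sum_sub_distrib, ← Finset.sum_mul, hJrow]
      simp [J, ← Finset.mul_sum, hg]
    calc |g x| = |∑ y, J x y * (g x - g y)| := by rw [← hx]
      _ ≤ ∑ y, |J x y * (g x - g y)| := Finset.abs_sum_le_sum_abs _ _
      _ = ∑ y, J x y * |g x - g y| := by
        refine Finset.sum_congr rfl fun y _ => ?_
        rw [abs_mul, abs_of_pos (show 0 < J x y by simpa [J] using hn)]
  simp only [sub_mul, Finset.sum_sub_distrib, mul_assoc, ← Finset.mul_sum] at habs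
  linarith [mul_le_mul_of_nonneg_left hJ hl]

/-- Cauchy–Schwarz for the edge measure of a symmetric Markov kernel, applied to an eigenvector. -/
theorem sum_mul_abs_add_mul_abs_le {V : Type*} [Fintype V] {P : Matrix V V ℝ}
    (hsymm : P.IsSymm) (hnonneg : ∀ x y, 0 ≤ P x y) (hrow : ∀ x, ∑ y, P x y = 1) {μ : ℝ}
    {f g : V → ℝ} (hf : P.mulVec f = μ • f) (hf1 : f ⬝ᵥ f = 1) (hg1 : g ⬝ᵥ g = 1) :
    ∑ x, ∑ y, P x y * (|f x + f y| * |g x|) ≤ √(2 * (1 + μ)) := by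
  have h := Real.sum_mul_le_sqrt_mul_sqrt (Finset.univ : Finset (V × V))
    (fun p => √(P p.1 p.2) * |f p.1 + f p.2|) (fun p => √(P p.1 p.2) * |g p.1|)
  simp only [mul_pow, sq_abs, Real.sq_sqrt (hnonneg _ _), Fintype.sum_prod_type] at h
  rw [sum_mul_add_sq_s2 hsymm hrow] at h
  simp only [← Finset.sum_mul, hrow, one_mul, hf, dotProduct_smul, hf1, smul_eq_mul] at h
  rw [show ∑ x, g x ^ 2 = 1 by simpa [dotProduct, sq] using hg1, Real.sqrt_one, mul_one,
    mul_one] at h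
  refine le_of_eq_of_le ?_ h
  refine Finset.sum_congr rfl fun x _ => Finset.sum_congr rfl fun y _ => ?_
  rw [mul_mul_mul_comm, Real.mul_self_sqrt (hnonneg _ _)]

/-- The product of two unit eigenvectors for an eigenvalue near `-1` has small total variation. -/
theorem sum_mul_abs_mul_sub_mul_le_s2 {V : Type*} [Fintype V] {P : Matrix V V ℝ}
    (hsymm : P.IsSymm) (hnonneg : ∀ x y, 0 ≤ P x y) (hrow : ∀ x, ∑ y, P x y = 1) {μ : ℝ}
    {f g : V → ℝ} (hf : P.mulVec f = μ • f) (hg : P.mulVec g = μ • g)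
    (hf1 : f ⬝ᵥ f = 1) (hg1 : g ⬝ᵥ g = 1) :
    ∑ x, ∑ y, P x y * |f x * g x - f y * g y| ≤ 2 * √(2 * (1 + μ)) := by
  have h₁ := sum_mul_abs_add_mul_abs_le hsymm hnonneg hrow hf hf1 hg1
  have h₂ := sum_mul_abs_add_mul_abs_le hsymm hnonneg hrow hg hg1 hf1
  rw [Finset.sum_comm] at h₂
  have h₃ : ∑ x, ∑ y, P x y * |f x * g x - f y * g y| ≤
      ∑ x, ∑ y, P x y * (|f x + f y| * |g x|) + ∑ x, ∑ y, P y x * (|g y + g x| * |f y|) := by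
    simp only [← Finset.sum_add_distrib]
    refine Finset.sum_le_sum fun x _ => Finset.sum_le_sum fun y _ => ?_
    rw [hsymm.apply x y, ← mul_add, ← abs_mul, ← abs_mul]
    refine mul_le_mul_of_nonneg_left ?_ (hnonneg x y)
    rw [show f x * g x - f y * g y = (f x + f y) * g x - (g y + g x) * f y by ring]
    exact abs_sub _ _
  linarith

/-- If an eigenvalue `μ` of a symmetric Markov kernel with spectral gap `l` has multiplicity at
least two, then `l ≤ 4 √(2 (1 + μ))`. -/
theorem gap_le_of_orthonormal_eigenvectors {V : Type*} [Fintype V] [Nonempty V]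
    {P : Matrix V V ℝ} (hsymm : P.IsSymm) (hnonneg : ∀ x y, 0 ≤ P x y)
    (hrow : ∀ x, ∑ y, P x y = 1) {l : ℝ} (hl : 0 ≤ l)
    (hgap : ∀ v : V → ℝ, ∑ x, v x = 0 → v ⬝ᵥ P.mulVec v ≤ (1 - l) * (v ⬝ᵥ v))
    {μ : ℝ} {f g : V → ℝ} (hf : P.mulVec f = μ • f) (hg : P.mulVec g = μ • g)
    (hf1 : f ⬝ᵥ f = 1) (hg1 : g ⬝ᵥ g = 1) (hfg : f ⬝ᵥ g = 0) :
    l ≤ 4 * √(2 * (1 + μ)) := by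
  have hprod := gap_mul_sum_abs_le hsymm hrow hl hgap (g := fun x => f x * g x)
    (by simpa [dotProduct] using hfg)
  have hdiff := gap_mul_sum_abs_le hsymm hrow hl hgap (g := fun x => f x * f x - g x * g x)
    (by simpa [dotProduct, Finset.sum_sub_distrib, sub_eq_zero] using hf1.trans hg1.symm)
  have hvar : ∑ x, ∑ y, P x y * |f x * f x - g x * g x - (f y * f y - g y * g y)| ≤
      ∑ x, ∑ y, P x y * |f x * f x - f y * f y| + ∑ x, ∑ y, P x y * |g x * g x - g y * g y| := by
    simp only [← Finset.sum_add_distrib, ← mul_add]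
    refine Finset.sum_le_sum fun x _ => Finset.sum_le_sum fun y _ =>
      mul_le_mul_of_nonneg_left ?_ (hnonneg x y)
    rw [sub_sub_sub_comm]
    exact abs_sub _ _
  have hsum : (2 : ℝ) ≤ ∑ x, |f x * f x - g x * g x| + 2 * ∑ x, |f x * g x| := by
    have h : ∑ x, (f x * f x + g x * g x) = 2 :=
      Finset.sum_add_distrib.trans ((congrArg₂ (· + ·) hf1 hg1).trans one_add_one_eq_two)
    rw [Finset.mul_sum, ← Finset.sum_add_distrib]
    refine h.symm.trans_le ?_
    refine Finset.sum_le_sum fun x _ => ?_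
    refine abs_le_of_sq_le_sq' ?_ (by positivity) |>.2
    have hcross := mul_nonneg (abs_nonneg (f x * f x - g x * g x)) (abs_nonneg (f x * g x))
    nlinarith [sq_abs (f x * f x - g x * g x), sq_abs (f x * g x)]
  have h₁ := sum_mul_abs_mul_sub_mul_le_s2 hsymm hnonneg hrow hf hf hf1 hf1
  have h₂ := sum_mul_abs_mul_sub_mul_le_s2 hsymm hnonneg hrow hg hg hg1 hg1
  have h₃ := sum_mul_abs_mul_sub_mul_le_s2 hsymm hnonneg hrow hf hg hf1 hg1
  linarith [mul_le_mul_of_nonneg_left hsum hl]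

/-- A unit eigenvector for an eigenvalue that is close to `-1` relative to the spectral gap is unique
up to sign. -/
theorem eq_or_eq_neg_of_gap_lt {V : Type*} [Fintype V] [Nonempty V]
    {P : Matrix V V ℝ} (hsymm : P.IsSymm) (hnonneg : ∀ x y, 0 ≤ P x y)
    (hrow : ∀ x, ∑ y, P x y = 1) {l : ℝ} (hl : 0 ≤ l)
    (hgap : ∀ v : V → ℝ, ∑ x, v x = 0 → v ⬝ᵥ P.mulVec v ≤ (1 - l) * (v ⬝ᵥ v))
    {μ : ℝ} (hlt : 4 * √(2 * (1 + μ)) < l) {f g : V → ℝ} (hf : P.mulVec f = μ • f)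
    (hg : P.mulVec g = μ • g) (hf1 : f ⬝ᵥ f = 1) (hg1 : g ⬝ᵥ g = 1) :
    g = f ∨ g = -f := by
  set c := f ⬝ᵥ g with hc
  have hk_sq : (g - c • f) ⬝ᵥ (g - c • f) = 1 - c ^ 2 := by
    simp only [dotProduct_sub, sub_dotProduct, dotProduct_smul, smul_dotProduct, hf1, hg1,
      dotProduct_comm g f, ← hc, smul_eq_mul]
    ring
  by_cases hk : g - c • f = 0
  · rw [hk, dotProduct_zero] at hk_sq
    rw [sub_eq_zero] at hk
    rcases mul_self_eq_one_iff.1 (show c * c = 1 by linarith) with h | h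
    · left; rw [hk, h, one_smul]
    · right; rw [hk, h, neg_one_smul]
  · have hpos : 0 < 1 - c ^ 2 := by
      rw [← hk_sq]
      exact lt_of_le_of_ne (Finset.sum_nonneg fun x _ => mul_self_nonneg _)
        (Ne.symm (dotProduct_self_eq_zero.not.2 hk))
    refine absurd (gap_le_of_orthonormal_eigenvectors hsymm hnonneg hrow hl hgap hf
      (g := (√(1 - c ^ 2))⁻¹ • (g - c • f)) ?_ hf1 ?_ ?_) (not_le.2 hlt)
    · simp only [Matrix.mulVec_smul, Matrix.mulVec_sub, hf, hg]
      module
    · rw [smul_dotProduct, dotProduct_smul, hk_sq, smul_eq_mul, smul_eq_mul, ← mul_assoc,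
        ← mul_inv, Real.mul_self_sqrt hpos.le, inv_mul_cancel₀ hpos.ne']
    · simp [dotProduct_sub, hf1, ← hc]

theorem normAdj_isSymm {V : Type*} [Fintype V] {G : SimpleGraph V} {d : ℕ}
    (hreg : G.IsRegularOfDegree d) : (normAdj G).IsSymm := by
  ext x y
  simp [normAdj, hreg.degree_eq, G.adj_comm]

theorem normAdj_nonneg {V : Type*} [Fintype V] (G : SimpleGraph V) (x y : V) :
    0 ≤ normAdj G x y := by
  simp only [normAdj, Matrix.of_apply]
  positivity

theorem sum_normAdj {V : Type*} [Fintype V] {G : SimpleGraph V} {x : V} (hx : 0 < G.degree x) :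
    ∑ y, normAdj G x y = 1 := by
  have : (G.degree x : ℝ) ≠ 0 := by positivity
  simp only [normAdj, Matrix.of_apply, ← Finset.sum_filter, Finset.sum_const, nsmul_eq_mul]
  rw [← SimpleGraph.neighborFinset_eq_filter, SimpleGraph.card_neighborFinset_eq_degree,
    mul_inv_cancel₀ this]

/-- Composing with a graph automorphism commutes with the normalized adjacency operator. -/
theorem normAdj_mulVec_comp {V : Type*} [Fintype V] (G : SimpleGraph V) (φ : G ≃g G)
    (f : V → ℝ) : (normAdj G).mulVec (f ∘ φ) = (normAdj G).mulVec f ∘ φ := by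
  ext x
  simp only [Matrix.mulVec, dotProduct, Function.comp_apply]
  rw [← Equiv.sum_comp φ.toEquiv fun y => normAdj G (φ x) y * f y]
  refine Finset.sum_congr rfl fun y _ => ?_
  have hdeg : G.degree (φ x) = G.degree x := φ.degree_eq x
  simp [normAdj, hdeg, φ.map_adj_iff]

/-- An eigenvector of constant modulus on a non-bipartite `d`-regular graph has eigenvalue at least
`-1 + 2 / d`. -/
theorem two_div_le_of_abs_eq {V : Type*} [Fintype V] {G : SimpleGraph V}
    (hnonbip : ¬ G.Colorable 2) {d : ℕ} (hreg : G.IsRegularOfDegree d)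
    (hrow : ∀ x, ∑ y, normAdj G x y = 1) {μ : ℝ} {f : V → ℝ}
    (hf : (normAdj G).mulVec f = μ • f) (hf0 : f ≠ 0) (habs : ∀ x y, |f x| = |f y|) :
    2 / (d : ℝ) ≤ 1 + μ := by
  obtain ⟨x, y, hxy, hsign⟩ : ∃ x y, G.Adj x y ∧ f x = f y := by
    by_contra! hne
    refine hnonbip (SimpleGraph.Coloring.colorable (α := Bool)
      (SimpleGraph.Coloring.mk (fun x => decide (0 < f x)) fun {x y} hxy h => hne x y hxy ?_))
    have := abs_eq_abs.1 (habs x y)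
    grind
  have hx : 0 < f x ^ 2 := by
    obtain ⟨z, hz⟩ := Function.ne_iff.1 hf0
    rw [← sq_abs, habs x z]
    exact pow_pos (abs_pos.2 hz) 2
  have hsum : ∑ z, normAdj G x z * (f x ^ 2 + f x * f z) = (1 + μ) * f x ^ 2 := by
    have h := congrFun hf x
    simp only [Matrix.mulVec, dotProduct, Pi.smul_apply, smul_eq_mul] at h
    have h' : ∑ z, normAdj G x z * (f x * f z) = f x * ∑ z, normAdj G x z * f z := by
      rw [Finset.mul_sum]
      exact Finset.sum_congr rfl fun z _ => by ring
    simp only [mul_add, Finset.sum_add_distrib, ← Finset.sum_mul, hrow, h', h]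
    ring
  have hle := Finset.single_le_sum (f := fun z => normAdj G x z * (f x ^ 2 + f x * f z))
    (fun z _ => mul_nonneg (normAdj_nonneg G x z) (by
      have h := abs_eq_abs.1 (habs z x)
      rcases h with h | h <;> rw [h] <;> nlinarith)) (Finset.mem_univ y)
  rw [hsum] at hle
  have hP : normAdj G x y = (d : ℝ)⁻¹ := by simp [normAdj, hxy, hreg.degree_eq]
  rw [hP, ← hsign] at hle
  refine le_of_mul_le_mul_right ?_ hx
  calc 2 / (d : ℝ) * f x ^ 2 = (d : ℝ)⁻¹ * (f x ^ 2 + f x * f x) := by ring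
    _ ≤ _ := hle


/-- **Corollary 1, second estimate**: for a finite, connected, non-bipartite,
vertex-transitive graph of degree `d` with normalized adjacency eigenvalues
`μs (n-1) = μₙ ≤ ⋯ ≤ μs 1 = μ₂ ≤ μs 0 = μ₁ = 1` (listed with multiplicity, in
decreasing order, as the roots of the characteristic polynomial of `D⁻¹A`), one has
`1 + μₙ ≥ min {2/d, 2(√(1 + (1-μ₂)/4) - 1)²}`. Non-bipartiteness is expressed as the
non-existence of a proper 2-coloring. -/
theorem one_add_smallest_ge_min_spectralGap {V : Type*} [Fintype V] (G : SimpleGraph V)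
    (hconn : G.Connected) (hn : 2 ≤ Fintype.card V)
    (hnonbip : ¬ G.Colorable 2)
    (hvt : VertexTransitive G)
    (d : ℕ) (hreg : G.IsRegularOfDegree d)
    (μs : Fin (Fintype.card V) → ℝ) (hanti : Antitone μs)
    (hchar : (normAdj G).charpoly = ∏ i, (X - C (μs i)))
    (hμ1 : μs ⟨0, by omega⟩ = 1) :
    1 + μs ⟨Fintype.card V - 1, by omega⟩ ≥
      min (2 / (d : ℝ))
        (2 * (Real.sqrt (1 + (1 - μs ⟨1, by omega⟩) / 4) - 1) ^ 2) := by
  set P := normAdj G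
  have : Nontrivial V := Fintype.one_lt_card_iff_nontrivial.1 hn
  have hsymm : P.IsSymm := normAdj_isSymm hreg
  have hnonneg : ∀ x y, 0 ≤ P x y := normAdj_nonneg G
  have hrow : ∀ x, ∑ y, P x y = 1 := fun x =>
    sum_normAdj (hconn.preconnected.degree_pos_of_nontrivial x)
  have hone : P.mulVec 1 = 1 := by
    ext x
    simpa [Matrix.mulVec, dotProduct] using hrow x
  have hA : P.IsHermitian := Matrix.isHermitian_iff_isSymm.2 hsymm
  have heig := eigenvalues₀_eq_of_charpoly_eq hA hanti hchar
  let e : Fin (Fintype.card V) ≃ V := Fintype.equivOfCardEq (Fintype.card_fin _)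
  have heig' : ∀ i, hA.eigenvalues i = μs (e.symm i) := fun i => by rw [← heig]; rfl
  set m := μs ⟨1, by omega⟩
  set μ := μs ⟨Fintype.card V - 1, by omega⟩ with hμ
  have hm1 : m ≤ 1 := hμ1 ▸ hanti (Fin.mk_le_mk.2 (Nat.zero_le 1))
  have hgap : ∀ v : V → ℝ, ∑ x, v x = 0 → v ⬝ᵥ P.mulVec v ≤ (1 - (1 - m)) * (v ⬝ᵥ v) := by
    intro v hv
    rw [sub_sub_cancel]
    refine dotProduct_mulVec_le_of_sum_eq_zero hA hone (i₀ := e ⟨0, by omega⟩)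
      (fun i hi => ?_) hm1 (fun i => ?_) hv
    · rw [heig']
      refine hanti (Fin.mk_le_of_le_val (Nat.one_le_iff_ne_zero.2 fun h0 => hi ?_))
      rw [← e.symm_apply_eq]
      exact Fin.ext h0
    · rw [heig', ← hμ1]
      exact hanti (Fin.mk_le_of_le_val (Nat.zero_le _))
  obtain ⟨f, hf, hf1⟩ : ∃ f : V → ℝ, P.mulVec f = μ • f ∧ f ⬝ᵥ f = 1 := by
    let i : V := e ⟨Fintype.card V - 1, by omega⟩
    refine ⟨⇑(hA.eigenvectorBasis i), ?_, ?_⟩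
    · rw [hA.mulVec_eigenvectorBasis, heig']
      simp [i, hμ]
    · have h := hA.eigenvectorBasis.inner_eq_one i
      rwa [PiLp.inner_apply] at h
  have hμ0 : 0 ≤ 1 + μ := by
    have h := sum_mul_add_sq_s2 hsymm hrow f
    rw [hf, dotProduct_smul, hf1, smul_eq_mul, mul_one] at h
    have h' : 0 ≤ ∑ x, ∑ y, P x y * (f x + f y) ^ 2 := Finset.sum_nonneg fun x _ =>
      Finset.sum_nonneg fun y _ => mul_nonneg (hnonneg x y) (sq_nonneg _)
    linarith
  rcases le_or_gt (1 - m) (4 * √(2 * (1 + μ))) with hle | hlt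
  · refine min_le_of_right_le ?_
    have h₁ : 1 ≤ √(1 + (1 - m) / 4) := Real.one_le_sqrt.2 (by linarith)
    have h₂ : √(1 + (1 - m) / 4) ≤ 1 + √(2 * (1 + μ)) / 2 := by
      refine Real.sqrt_le_iff.2 ⟨by positivity, ?_⟩
      nlinarith [sq_nonneg (√(2 * (1 + μ)))]
    have h₃ := Real.sq_sqrt (show 0 ≤ 2 * (1 + μ) by linarith)
    nlinarith
  · refine min_le_of_left_le (two_div_le_of_abs_eq hnonbip hreg hrow hf ?_ fun x y => ?_)
    · rintro rfl
      simp at hf1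
    · obtain ⟨φ, rfl⟩ := hvt x y
      have h := eq_or_eq_neg_of_gap_lt hsymm hnonneg hrow (sub_nonneg.2 hm1) hgap hlt hf
        (g := f ∘ φ) (by rw [normAdj_mulVec_comp, hf]; rfl) hf1 (by
          rw [← hf1]
          exact Equiv.sum_comp φ.toEquiv fun z => f z * f z)
      rcases h with h | h
      · rw [← Function.comp_apply (f := f), h]
      · rw [← Function.comp_apply (f := f), h, Pi.neg_apply, abs_neg]

end
end

section
/- Let G=(V,E) be a finite connected graph with second-largest normalized adjacency eigenvalue μ_2, and let f, g be eigenfunctions of D^{-1}A with eigenvalues μ and ν respectively, normalized so that ‖f‖₂ = ‖g‖₂ = 1, and with (1+μ)/(1−μ_2) ≤ 1 and (1+ν)/(1−μ_2) ≤ 1. Then ⟨|f|, |g|⟩ ≥ √(1 − (1+μ)/(1−μ_2)) · √(1 − (1+ν)/(1−μ_2)) − √((1+μ)/(1−μ_2)) · √((1+ν)/(1−μ_2)). -/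
open Finset Polynomial

noncomputable section
open scoped Classical

/-- The degree-weighted inner product `⟨f,g⟩ = ∑ u, f u * g u * d_u`. -/
def dInner {V : Type*} [Fintype V] (G : SimpleGraph V) (f g : V → ℝ) : ℝ :=
  ∑ u, f u * g u * (G.degree u : ℝ)

/-- The `ℓ²`-norm associated to the degree-weighted inner product. -/
def dNorm {V : Type*} [Fintype V] (G : SimpleGraph V) (f : V → ℝ) : ℝ :=
  Real.sqrt (dInner G f f)

section

variable {V : Type*} [Fintype V] {G : SimpleGraph V}

lemma dInner_comm (f g : V → ℝ) : dInner G f g = dInner G g f := by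
  simp only [dInner, mul_comm (f _)]

lemma dInner_smul_right (c : ℝ) (f g : V → ℝ) : dInner G f (c • g) = c * dInner G f g := by
  simp only [dInner, mul_sum, Pi.smul_apply, smul_eq_mul]
  exact sum_congr rfl fun u _ => by ring

lemma dInner_eq_sum_adj (f g : V → ℝ) :
    dInner G f g = ∑ u, ∑ v, if G.Adj u v then f u * g u else 0 := by
  refine sum_congr rfl fun u _ => ?_
  rw [← sum_filter, sum_const, nsmul_eq_mul, mul_comm, ← G.card_neighborFinset_eq_degree,
    G.neighborFinset_eq_filter]

lemma dInner_normAdj_mulVec (hdeg : ∀ u, 0 < G.degree u) (f g : V → ℝ) :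
    dInner G f ((normAdj G).mulVec g) = ∑ u, ∑ v, if G.Adj u v then f u * g v else 0 := by
  refine sum_congr rfl fun u _ => ?_
  have hu : (G.degree u : ℝ) ≠ 0 := by exact_mod_cast (hdeg u).ne'
  simp only [Matrix.mulVec, dotProduct, normAdj, Matrix.of_apply, mul_sum, sum_mul]
  refine sum_congr rfl fun v _ => ?_
  split_ifs <;> field_simp
  ring

/-- The normalized adjacency matrix is self-adjoint for the degree-weighted inner product. -/
lemma dInner_normAdj_mulVec_comm (hdeg : ∀ u, 0 < G.degree u) (f g : V → ℝ) :
    dInner G f ((normAdj G).mulVec g) = dInner G ((normAdj G).mulVec f) g := by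
  rw [dInner_comm _ g, dInner_normAdj_mulVec hdeg, dInner_normAdj_mulVec hdeg, sum_comm]
  simp only [G.adj_comm, mul_comm]

/-- The Dirichlet form of the normalized Laplacian. -/
lemma sum_adj_sub_sq (hdeg : ∀ u, 0 < G.degree u) (f : V → ℝ) :
    ∑ u, ∑ v, (if G.Adj u v then (f u - f v) ^ 2 else 0) =
      2 * (dInner G f f - dInner G f ((normAdj G).mulVec f)) := by
  have hswap : dInner G f f = ∑ u, ∑ v, if G.Adj u v then f v * f v else 0 := by
    rw [dInner_eq_sum_adj, sum_comm]
    simp only [G.adj_comm]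
  have hsplit : 2 * (dInner G f f - dInner G f ((normAdj G).mulVec f)) =
      dInner G f f + dInner G f f - 2 * dInner G f ((normAdj G).mulVec f) := by ring
  rw [hsplit]
  nth_rw 1 [dInner_eq_sum_adj]
  rw [hswap, dInner_normAdj_mulVec hdeg, mul_sum, ← sum_add_distrib, ← sum_sub_distrib]
  refine sum_congr rfl fun u _ => ?_
  rw [mul_sum, ← sum_add_distrib, ← sum_sub_distrib]
  refine sum_congr rfl fun v _ => ?_
  split_ifs <;> ring

/-- Every eigenvalue of the normalized adjacency matrix is at most `1`. -/
lemma eigenvalue_le_one (hdeg : ∀ u, 0 < G.degree u) {f : V → ℝ} {c : ℝ}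
    (hf : dInner G f f = 1) (hfe : (normAdj G).mulVec f = c • f) : c ≤ 1 := by
  have h := sum_adj_sub_sq hdeg f
  rw [hfe, dInner_smul_right, hf] at h
  have hnonneg : 0 ≤ ∑ u, ∑ v, (if G.Adj u v then (f u - f v) ^ 2 else 0) :=
    sum_nonneg fun u _ => sum_nonneg fun v _ => by split_ifs <;> positivity
  linarith

/-- On a connected graph the eigenfunctions of eigenvalue `1` are constant. -/
lemma eq_of_normAdj_mulVec_eq_self (hconn : G.Connected) (hdeg : ∀ u, 0 < G.degree u)
    {f : V → ℝ} (hfe : (normAdj G).mulVec f = f) (u v : V) : f u = f v := by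
  have h := sum_adj_sub_sq hdeg f
  rw [hfe, sub_self, mul_zero] at h
  have hterm (u v : V) : 0 ≤ if G.Adj u v then (f u - f v) ^ 2 else 0 := by
    split_ifs <;> positivity
  have hadj {u v : V} (huv : G.Adj u v) : f u = f v := by
    have hu := (sum_eq_zero_iff_of_nonneg fun u _ => sum_nonneg fun v _ => hterm u v).1 h u
      (mem_univ u)
    have hv := (sum_eq_zero_iff_of_nonneg fun v _ => hterm u v).1 hu v (mem_univ v)
    rw [if_pos huv] at hv
    exact sub_eq_zero.1 (pow_eq_zero_iff two_ne_zero |>.1 hv)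
  obtain ⟨p⟩ := hconn.preconnected u v
  induction p with
  | nil => rfl
  | cons h _ ih => exact (hadj h).trans ih

/-- The constant functions are fixed by the normalized adjacency matrix. -/
lemma normAdj_mulVec_one (hdeg : ∀ u, 0 < G.degree u) : (normAdj G).mulVec 1 = 1 := by
  ext u
  have hu : (G.degree u : ℝ) ≠ 0 := by exact_mod_cast (hdeg u).ne'
  simp only [Matrix.mulVec, dotProduct, normAdj, Matrix.of_apply, Pi.one_apply, mul_one]
  rw [← sum_filter, sum_const, nsmul_eq_mul, ← G.neighborFinset_eq_filter,
    G.card_neighborFinset_eq_degree, mul_inv_cancel₀ hu]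

/-- The eigenvalues of a Hermitian matrix in decreasing order are determined by any
decreasing list of the roots of its characteristic polynomial. -/
lemma Matrix.IsHermitian.eigenvalues₀_eq_of_charpoly {n : Type*} [Fintype n] [DecidableEq n]
    {A : Matrix n n ℝ} (hA : A.IsHermitian) {μs : Fin (Fintype.card n) → ℝ} (hanti : Antitone μs)
    (hchar : A.charpoly = ∏ i, (X - C (μs i))) : hA.eigenvalues₀ = μs := by
  have hroots : A.charpoly.roots = univ.val.map μs := by
    rw [hchar, Polynomial.roots_prod]
    · simp
    · simp [Finset.prod_ne_zero_iff, Polynomial.X_sub_C_ne_zero]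
  rw [hA.roots_charpoly_eq_eigenvalues₀, Fin.univ_val_map, Fin.univ_val_map,
    Multiset.coe_eq_coe] at hroots
  exact List.ofFn_injective <| List.Perm.eq_of_sortedGE
    hA.eigenvalues₀_antitone.sortedGE_ofFn hanti.sortedGE_ofFn hroots

/-- The normalized adjacency matrix has an eigenbasis orthonormal for the degree-weighted inner
product, ordered like the roots of the characteristic polynomial. -/
lemma exists_orthonormal_eigenbasis (hdeg : ∀ u, 0 < G.degree u)
    {μs : Fin (Fintype.card V) → ℝ} (hanti : Antitone μs)
    (hchar : (normAdj G).charpoly = ∏ i, (X - C (μs i))) :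
    ∃ w : Fin (Fintype.card V) → V → ℝ,
      (∀ i, (normAdj G).mulVec (w i) = μs i • w i) ∧
      (∀ i j, dInner G (w i) (w j) = if i = j then 1 else 0) ∧
      ∀ f g, dInner G f g = ∑ i, dInner G f (w i) * dInner G g (w i) := by
  set s : V → ℝ := fun u => √(G.degree u)
  have hs (u : V) : s u ≠ 0 := (Real.sqrt_pos.2 (by exact_mod_cast hdeg u)).ne'
  have hss (u : V) : s u * s u = G.degree u := Real.mul_self_sqrt (Nat.cast_nonneg _)
  set B : Matrix V V ℝ := Matrix.of fun u v => if G.Adj u v then (s u)⁻¹ else 0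
  set N : Matrix V V ℝ := B * Matrix.diagonal fun u => (s u)⁻¹
  have hNapply (u v : V) : N u v = if G.Adj u v then (s u)⁻¹ * (s v)⁻¹ else 0 := by
    simp only [N, B, Matrix.mul_diagonal, Matrix.of_apply]
    split_ifs <;> simp
  have hM : normAdj G = (Matrix.diagonal fun u => (s u)⁻¹) * B := by
    ext u v
    simp only [normAdj, B, Matrix.diagonal_mul, Matrix.of_apply, ← hss u, mul_inv]
    split_ifs <;> simp
  have hN : N.IsHermitian := by
    ext u v
    simp only [Matrix.conjTranspose_apply, hNapply, star_trivial, G.adj_comm, mul_comm]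
  have hchar' : N.charpoly = ∏ i, (X - C (μs i)) := by
    rw [← hchar, hM, Matrix.charpoly_mul_comm]
  have hμs := hN.eigenvalues₀_eq_of_charpoly hanti hchar'
  let e : Fin (Fintype.card V) ≃ V := Fintype.equivOfCardEq (Fintype.card_fin _)
  have hinner (x y : EuclideanSpace ℝ V) :
      dInner G (fun u => (s u)⁻¹ * x u) (fun u => (s u)⁻¹ * y u) = inner ℝ x y := by
    simp only [dInner, PiLp.inner_apply, ← hss, RCLike.inner_apply, conj_trivial]
    refine sum_congr rfl fun u _ => ?_
    have := hs u
    field_simp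
  refine ⟨fun i u => (s u)⁻¹ * hN.eigenvectorBasis (e i) u, fun i => ?_, fun i j => ?_,
    fun f g => ?_⟩
  · have h := hN.mulVec_eigenvectorBasis (e i)
    have hval : hN.eigenvalues (e i) = μs i := by
      rw [← hμs]
      exact congrArg hN.eigenvalues₀ (e.symm_apply_apply i)
    rw [hval] at h
    ext u
    have hu := congrFun h u
    simp only [Matrix.mulVec, dotProduct, Pi.smul_apply, smul_eq_mul] at hu ⊢
    rw [mul_left_comm, ← hu, mul_sum]
    refine sum_congr rfl fun v _ => ?_
    rw [hNapply, hM, Matrix.diagonal_mul]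
    simp only [B, Matrix.of_apply]
    split_ifs <;> ring
  · rw [hinner, orthonormal_iff_ite.1 hN.eigenvectorBasis.orthonormal]
    simp only [e.injective.eq_iff]
  · have hlift (f : V → ℝ) : ∃ x : EuclideanSpace ℝ V, f = fun u => (s u)⁻¹ * x u :=
      ⟨WithLp.toLp 2 fun u => s u * f u, by ext u; simp [hs u]⟩
    obtain ⟨x, rfl⟩ := hlift f
    obtain ⟨y, rfl⟩ := hlift g
    simp only [hinner]
    rw [e.sum_comp fun i => inner ℝ x (hN.eigenvectorBasis i) * inner ℝ y (hN.eigenvectorBasis i),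
      ← hN.eigenvectorBasis.sum_inner_mul_inner x y]
    simp only [real_inner_comm]

/-- On a connected graph the eigenvalue `1` is simple. -/
lemma eigenvalue_lt_one_of_ne (hconn : G.Connected) (hdeg : ∀ u, 0 < G.degree u)
    {ι : Type*} [DecidableEq ι] {μs : ι → ℝ} {w : ι → V → ℝ}
    (hwe : ∀ i, (normAdj G).mulVec (w i) = μs i • w i)
    (hw : ∀ i j, dInner G (w i) (w j) = if i = j then 1 else 0) {i j : ι} (hij : i ≠ j)
    (hi : μs i = 1) : μs j < 1 := by
  refine (eigenvalue_le_one hdeg (by simp [hw]) (hwe j)).lt_of_ne fun hj => ?_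
  obtain ⟨v⟩ := hconn.nonempty
  have hconst {k : ι} (hk : μs k = 1) : w k = w k v • 1 := by
    ext u
    simpa using eq_of_normAdj_mulVec_eq_self hconn hdeg (by rw [hwe, hk, one_smul]) u v
  have hii := hw i i
  have hji := hw j i
  have hjj := hw j j
  rw [if_pos rfl, hconst hi, dInner_smul_right] at hii
  rw [if_pos rfl, hconst hj, dInner_smul_right] at hjj
  rw [if_neg hij.symm, hconst hi, hconst hj, dInner_smul_right] at hji
  rw [dInner_comm, dInner_smul_right] at hii hjj hji
  have h1 : w i v ≠ 0 := by rintro h; simp [h] at hii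
  have h2 : w j v ≠ 0 := by rintro h; simp [h] at hjj
  have h3 : dInner G 1 1 ≠ 0 := by rintro h; simp [h] at hjj
  simp [h1, h2, h3] at hji

/-- The top eigenvalue of the normalized adjacency matrix is `1`. -/
lemma top_eigenvalue_eq_one [Nonempty V] (hdeg : ∀ u, 0 < G.degree u)
    {ι : Type*} [Fintype ι] [DecidableEq ι] {μs : ι → ℝ} {w : ι → V → ℝ}
    (hwe : ∀ i, (normAdj G).mulVec (w i) = μs i • w i)
    (hw : ∀ i j, dInner G (w i) (w j) = if i = j then 1 else 0)
    (hparseval : ∀ f g, dInner G f g = ∑ i, dInner G f (w i) * dInner G g (w i))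
    {i : ι} (hmax : ∀ j, μs j ≤ μs i) : μs i = 1 := by
  refine (eigenvalue_le_one hdeg (by simp [hw]) (hwe i)).antisymm ?_
  have hpos : 0 < dInner G 1 1 :=
    sum_pos (fun u _ => by simpa using hdeg u) univ_nonempty
  rw [hparseval] at hpos
  obtain ⟨j, -, hj⟩ := exists_ne_zero_of_sum_ne_zero hpos.ne'
  have h := dInner_normAdj_mulVec_comm hdeg 1 (w j)
  rw [hwe, dInner_smul_right, normAdj_mulVec_one hdeg] at h
  have : μs j = 1 := mul_right_cancel₀ (left_ne_zero_of_mul hj) (by rw [h, one_mul])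
  exact this ▸ hmax j

/-- Passing to absolute values keeps the quadratic form of `D⁻¹A` above its negative. -/
lemma neg_eigenvalue_le_dInner_abs (hdeg : ∀ u, 0 < G.degree u) {f : V → ℝ} {c : ℝ}
    (hf : dInner G f f = 1) (hfe : (normAdj G).mulVec f = c • f) :
    -c ≤ dInner G |f| ((normAdj G).mulVec |f|) := by
  have h : c = dInner G f ((normAdj G).mulVec f) := by rw [hfe, dInner_smul_right, hf, mul_one]
  rw [h, dInner_normAdj_mulVec hdeg, dInner_normAdj_mulVec hdeg, ← sum_neg_distrib]
  refine sum_le_sum fun u _ => ?_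
  rw [← sum_neg_distrib]
  refine sum_le_sum fun v _ => ?_
  split_ifs
  · simpa only [Pi.abs_apply, abs_mul] using neg_le_abs (f u * f v)
  · simp

/-- The mass of `|f|` away from the top eigenfunction is at most `(1 + c) / (1 - μ₂)`, for `f` a
normalized eigenfunction of eigenvalue `c`. -/
lemma one_sub_sq_dInner_abs_le (hdeg : ∀ u, 0 < G.degree u)
    {ι : Type*} [Fintype ι] {μs : ι → ℝ} {w : ι → V → ℝ} {m c : ℝ} {i : ι}
    (hwe : ∀ i, (normAdj G).mulVec (w i) = μs i • w i)
    (hparseval : ∀ f g, dInner G f g = ∑ i, dInner G f (w i) * dInner G g (w i))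
    (hi : μs i = 1) (hm : m < 1) (hle : ∀ j ≠ i, μs j ≤ m) {f : V → ℝ}
    (hf : dInner G f f = 1) (hfe : (normAdj G).mulVec f = c • f) :
    1 - dInner G |f| (w i) ^ 2 ≤ (1 + c) / (1 - m) := by
  have hlow := neg_eigenvalue_le_dInner_abs hdeg hf hfe
  have habs : dInner G |f| |f| = 1 := by
    rw [← hf]
    simp [dInner]
  rw [hparseval] at hlow habs
  simp only [← dInner_normAdj_mulVec_comm hdeg, hwe, dInner_smul_right] at hlow
  rw [← add_sum_erase _ _ (mem_univ i)] at hlow habs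
  have hup : ∑ j ∈ univ.erase i, dInner G |f| (w j) * (μs j * dInner G |f| (w j)) ≤
      m * ∑ j ∈ univ.erase i, dInner G |f| (w j) * dInner G |f| (w j) := by
    rw [mul_sum]
    refine sum_le_sum fun j hj => ?_
    nlinarith [hle j (ne_of_mem_erase hj), mul_self_nonneg (dInner G |f| (w j))]
  rw [hi] at hlow
  rw [le_div_iff₀ (by linarith)]
  rw [← eq_sub_iff_add_eq'] at habs
  rw [habs] at hup
  nlinarith

end

/-- **Lemma 4**: for a finite connected graph with second largest normalized adjacency
eigenvalue `μ₂ = μs 1` (eigenvalues listed with multiplicity in decreasing order as the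
roots of the characteristic polynomial of `D⁻¹A`), if `f, g` are eigenfunctions with
eigenvalues `μ, ν`, `‖f‖₂ = ‖g‖₂ = 1`, `(1+μ)/(1-μ₂) ≤ 1` and `(1+ν)/(1-μ₂) ≤ 1`, then
`⟨|f|,|g|⟩ ≥ √(1-(1+μ)/(1-μ₂))·√(1-(1+ν)/(1-μ₂)) - √((1+μ)/(1-μ₂))·√((1+ν)/(1-μ₂))`. -/
theorem inner_abs_abs_ge {V : Type*} [Fintype V] (G : SimpleGraph V)
    (hconn : G.Connected) (hn : 2 ≤ Fintype.card V)
    (μs : Fin (Fintype.card V) → ℝ) (hanti : Antitone μs)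
    (hchar : (normAdj G).charpoly = ∏ i, (X - C (μs i)))
    (μ ν : ℝ) (f g : V → ℝ)
    (hf : f ≠ 0) (hfe : (normAdj G).mulVec f = μ • f) (hfnorm : dNorm G f = 1)
    (hg : g ≠ 0) (hge : (normAdj G).mulVec g = ν • g) (hgnorm : dNorm G g = 1)
    (hμ : (1 + μ) / (1 - μs ⟨1, by omega⟩) ≤ 1)
    (hν : (1 + ν) / (1 - μs ⟨1, by omega⟩) ≤ 1) :
    dInner G (fun w => |f w|) (fun w => |g w|) ≥
      Real.sqrt (1 - (1 + μ) / (1 - μs ⟨1, by omega⟩)) *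
        Real.sqrt (1 - (1 + ν) / (1 - μs ⟨1, by omega⟩)) -
      Real.sqrt ((1 + μ) / (1 - μs ⟨1, by omega⟩)) *
        Real.sqrt ((1 + ν) / (1 - μs ⟨1, by omega⟩)) := by
  have : Nontrivial V := Fintype.one_lt_card_iff_nontrivial.1 hn
  have hdeg (u : V) : 0 < G.degree u := hconn.preconnected.degree_pos_of_nontrivial u
  obtain ⟨w, hwe, hw, hparseval⟩ := exists_orthonormal_eigenbasis hdeg hanti hchar
  set i₀ : Fin (Fintype.card V) := ⟨0, by omega⟩
  set i₁ : Fin (Fintype.card V) := ⟨1, by omega⟩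
  have h₀ : μs i₀ = 1 := top_eigenvalue_eq_one hdeg hwe hw hparseval
    fun j => hanti (Fin.le_def.2 (Nat.zero_le _))
  have h₁ : μs i₁ < 1 :=
    eigenvalue_lt_one_of_ne hconn hdeg hwe hw (i := i₀) (by simp [i₀, i₁]) h₀
  have hle (j : Fin (Fintype.card V)) (hj : j ≠ i₀) : μs j ≤ μs i₁ :=
    hanti (Fin.le_def.2 (Nat.one_le_iff_ne_zero.2 fun h => hj (Fin.ext h)))
  have hff : dInner G f f = 1 := Real.sqrt_eq_one.1 hfnorm
  have hgg : dInner G g g = 1 := Real.sqrt_eq_one.1 hgnorm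
  have ha := one_sub_sq_dInner_abs_le hdeg hwe hparseval h₀ h₁ hle hff hfe
  have hb := one_sub_sq_dInner_abs_le hdeg hwe hparseval h₀ h₁ hle hgg hge
  have hsum {k : V → ℝ} (hk : dInner G k k = 1) :
      ∑ j ∈ univ.erase i₀, dInner G |k| (w j) ^ 2 = 1 - dInner G |k| (w i₀) ^ 2 := by
    have habs : dInner G |k| |k| = 1 := by rw [← hk]; simp [dInner]
    rw [hparseval, ← add_sum_erase _ _ (mem_univ i₀)] at habs
    simp only [← sq] at habs
    linarith
  have hab : 0 ≤ dInner G |f| (w i₀) * dInner G |g| (w i₀) := by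
    obtain ⟨v⟩ := hconn.nonempty
    have hconst : w i₀ = w i₀ v • 1 := by
      ext u
      simpa using eq_of_normAdj_mulVec_eq_self hconn hdeg (by rw [hwe, h₀, one_smul]) u v
    have hnonneg (k : V → ℝ) : 0 ≤ dInner G |k| 1 :=
      sum_nonneg fun u _ => by simp only [Pi.abs_apply, Pi.one_apply]; positivity
    rw [hconst, dInner_smul_right, dInner_smul_right, mul_mul_mul_comm]
    exact mul_nonneg (mul_self_nonneg _) (mul_nonneg (hnonneg f) (hnonneg g))
  have hmain : √(1 - (1 + μ) / (1 - μs i₁)) * √(1 - (1 + ν) / (1 - μs i₁)) ≤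
      dInner G |f| (w i₀) * dInner G |g| (w i₀) := by
    rw [← abs_of_nonneg hab, abs_mul]
    exact mul_le_mul (Real.sqrt_le_iff.2 ⟨abs_nonneg _, by rw [sq_abs]; linarith⟩)
      (Real.sqrt_le_iff.2 ⟨abs_nonneg _, by rw [sq_abs]; linarith⟩)
      (Real.sqrt_nonneg _) (abs_nonneg _)
  have hrest : -(√((1 + μ) / (1 - μs i₁)) * √((1 + ν) / (1 - μs i₁))) ≤
      ∑ j ∈ univ.erase i₀, dInner G |f| (w j) * dInner G |g| (w j) := by
    have hcs := Real.sum_mul_le_sqrt_mul_sqrt (univ.erase i₀)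
      (fun j => -dInner G |f| (w j)) (fun j => dInner G |g| (w j))
    simp only [neg_sq, neg_mul, sum_neg_distrib, hsum hff, hsum hgg] at hcs
    have hmono := mul_le_mul (Real.sqrt_le_sqrt ha) (Real.sqrt_le_sqrt hb)
      (Real.sqrt_nonneg _) (Real.sqrt_nonneg _)
    linarith
  change _ ≤ dInner G |f| |g|
  rw [hparseval, ← add_sum_erase _ _ (mem_univ i₀)]
  linarith

end
end

section
/- Let G=(V,E) be a finite connected graph with normalized adjacency eigenvalues μ_n ≤ … ≤ μ_2 ≤ μ_1 = 1. Then 1 + μ_{n-1} ≥ 2(√(1 + (1−μ_2)/4) − 1)^2. -/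
open Finset Polynomial

noncomputable section
open scoped Classical

/-- The entrywise absolute value of a Euclidean vector. -/
def euclideanAbs {V : Type*} [Fintype V] (x : EuclideanSpace ℝ V) : EuclideanSpace ℝ V :=
  WithLp.toLp 2 fun v => |x v|

lemma norm_euclideanAbs {V : Type*} [Fintype V] (x : EuclideanSpace ℝ V) :
    ‖euclideanAbs x‖ = ‖x‖ := by
  simp [EuclideanSpace.norm_eq, euclideanAbs]

lemma abs_inner_euclideanAbs_le {V : Type*} [Fintype V] (p x : EuclideanSpace ℝ V) :
    |inner ℝ p (euclideanAbs x)| ≤ ∑ v, |p v| * |x v| := by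
  simp only [euclideanAbs, PiLp.inner_apply]
  refine (Finset.abs_sum_le_sum_abs _ _).trans (Finset.sum_le_sum fun v _ => ?_)
  simp [abs_mul, mul_comm]

/-- A matrix with nonnegative entries satisfies `-⟪x, N x⟫ ≤ ⟪|x|, N |x|⟫`. -/
lemma neg_inner_toEuclideanLin_le {V : Type*} [Fintype V] {N : Matrix V V ℝ}
    (hN : ∀ u v, 0 ≤ N u v) (x : EuclideanSpace ℝ V) :
    -inner ℝ x (Matrix.toEuclideanLin N x) ≤
      inner ℝ (euclideanAbs x) (Matrix.toEuclideanLin N (euclideanAbs x)) := by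
  simp only [PiLp.inner_apply, Matrix.toLpLin_apply, Matrix.mulVec, dotProduct, euclideanAbs,
    RCLike.inner_apply, conj_trivial, ← Finset.sum_neg_distrib, Finset.sum_mul]
  refine Finset.sum_le_sum fun u _ => Finset.sum_le_sum fun v _ => ?_
  have h : -(x v * x u) ≤ |x v| * |x u| := by
    rw [← abs_mul]
    exact neg_le_abs _
  nlinarith [mul_le_mul_of_nonneg_left h (hN u v)]

lemma inner_apply_eq_sum_of_eigenbasis {ι E : Type*} [Fintype ι] [NormedAddCommGroup E]
    [InnerProductSpace ℝ E] (b : OrthonormalBasis ι ℝ E) (T : E →ₗ[ℝ] E) (μ : ι → ℝ)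
    (hT : ∀ i, T (b i) = μ i • b i) (x : E) :
    inner ℝ x (T x) = ∑ i, μ i * inner ℝ (b i) x ^ 2 := by
  conv_lhs => rw [← b.sum_repr' x, map_sum, b.sum_repr' x, inner_sum]
  refine Finset.sum_congr rfl fun i _ => ?_
  rw [map_smul, hT, inner_smul_right, inner_smul_right, real_inner_comm]
  ring

/-- Spectral data of a matrix with nonnegative entries: an orthonormal eigenbasis listed in
decreasing order of eigenvalues, the largest of which is `1`. The absolute value of a vector in
the span of the last two eigenvectors correlates with the first one. -/
lemma spectralGap_mul_le_of_mem_bottom {V : Type*} [Fintype V] {n : ℕ} (hn : 2 ≤ n)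
    {N : Matrix V V ℝ} (hN : ∀ u v, 0 ≤ N u v)
    (b : OrthonormalBasis (Fin n) ℝ (EuclideanSpace ℝ V)) {μ : Fin n → ℝ} (hμ : Antitone μ)
    (hb : ∀ i, Matrix.toEuclideanLin N (b i) = μ i • b i) (hμ1 : μ ⟨0, by omega⟩ = 1)
    {k : Fin n} {x : EuclideanSpace ℝ V} (hx : ∀ i < k, inner ℝ (b i) x = 0) :
    (1 - μ ⟨1, by omega⟩) * (‖x‖ ^ 2 - inner ℝ (b ⟨0, by omega⟩) (euclideanAbs x) ^ 2) ≤
      (1 + μ k) * ‖x‖ ^ 2 := by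
  have hsum (y : EuclideanSpace ℝ V) : ∑ i, inner ℝ (b i) y ^ 2 = ‖y‖ ^ 2 := by
    simpa using b.sum_sq_norm_inner_right y
  have hlow : inner ℝ x (Matrix.toEuclideanLin N x) ≤ μ k * ‖x‖ ^ 2 := by
    rw [inner_apply_eq_sum_of_eigenbasis b _ μ hb, ← hsum x, Finset.mul_sum]
    refine Finset.sum_le_sum fun i _ => ?_
    rcases lt_or_ge i k with h | h
    · simp [hx i h]
    · exact mul_le_mul_of_nonneg_right (hμ h) (sq_nonneg _)
  have hhigh (y : EuclideanSpace ℝ V) : inner ℝ y (Matrix.toEuclideanLin N y) ≤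
      μ ⟨1, by omega⟩ * ‖y‖ ^ 2 +
        (1 - μ ⟨1, by omega⟩) * inner ℝ (b ⟨0, by omega⟩) y ^ 2 := by
    rw [inner_apply_eq_sum_of_eigenbasis b _ μ hb, ← hsum y, Finset.mul_sum,
      ← Finset.add_sum_erase _ _ (Finset.mem_univ (⟨0, by omega⟩ : Fin n)),
      ← Finset.add_sum_erase _ (fun i => μ ⟨1, by omega⟩ * inner ℝ (b i) y ^ 2)
        (Finset.mem_univ (⟨0, by omega⟩ : Fin n)), hμ1]
    have : ∑ i ∈ Finset.univ.erase (⟨0, by omega⟩ : Fin n), μ i * inner ℝ (b i) y ^ 2 ≤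
        ∑ i ∈ Finset.univ.erase (⟨0, by omega⟩ : Fin n),
          μ ⟨1, by omega⟩ * inner ℝ (b i) y ^ 2 := by
      refine Finset.sum_le_sum fun i hi => mul_le_mul_of_nonneg_right (hμ ?_) (sq_nonneg _)
      have hi0 : (i : ℕ) ≠ 0 := fun h => Finset.ne_of_mem_erase hi (Fin.ext h)
      exact Fin.le_def.2 (Nat.one_le_iff_ne_zero.2 hi0)
    linarith
  have h1 := neg_inner_toEuclideanLin_le hN x
  have h2 := hhigh (euclideanAbs x)
  rw [norm_euclideanAbs] at h2
  nlinarith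

lemma neg_one_le_of_eigenbasis {V : Type*} [Fintype V] {n : ℕ} (hn : 2 ≤ n)
    {N : Matrix V V ℝ} (hN : ∀ u v, 0 ≤ N u v)
    (b : OrthonormalBasis (Fin n) ℝ (EuclideanSpace ℝ V)) {μ : Fin n → ℝ} (hμ : Antitone μ)
    (hb : ∀ i, Matrix.toEuclideanLin N (b i) = μ i • b i) (hμ1 : μ ⟨0, by omega⟩ = 1)
    (k : Fin n) : -1 ≤ μ k := by
  have h := spectralGap_mul_le_of_mem_bottom hn hN b hμ hb hμ1 (k := k) (x := b k)
    fun i hi => b.inner_eq_zero hi.ne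
  have hgap : μ ⟨1, by omega⟩ ≤ 1 := hμ1 ▸ hμ (Fin.le_def.2 (Nat.zero_le _))
  have hcs := abs_real_inner_le_norm (b ⟨0, by omega⟩) (euclideanAbs (b k))
  rw [norm_euclideanAbs, b.norm_eq_one, b.norm_eq_one, mul_one] at hcs
  rw [b.norm_eq_one] at h
  have hsq : inner ℝ (b ⟨0, by omega⟩) (euclideanAbs (b k)) ^ 2 ≤ 1 := by
    rw [← sq_abs]
    exact pow_le_one₀ (abs_nonneg _) hcs
  nlinarith [mul_nonneg (sub_nonneg.2 hgap) (sub_nonneg.2 hsq)]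

lemma mul_abs_add_abs_le (p a b : ℝ) :
    p * |a| + p * |b| + 7 / 10 * (p * |a + b| + p * |a - b|) ≤
      23 / 25 * (a ^ 2 + b ^ 2) + 169 / 92 * p ^ 2 := by
  have key (s t : ℝ) :
      p * (12 / 5 * s + t) ≤ 23 / 25 * (s ^ 2 + t ^ 2) + 169 / 92 * p ^ 2 := by
    nlinarith [sq_nonneg (23 / 25 * s - 6 / 5 * p), sq_nonneg (23 / 25 * t - 1 / 2 * p)]
  have h1 := key |a| |b|
  have h2 := key |b| |a|
  rw [sq_abs, sq_abs] at h1 h2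
  have hmax : |a + b| + |a - b| = 2 * max |a| |b| := by
    rcases abs_cases a with ⟨ha, _⟩ | ⟨ha, _⟩ <;> rcases abs_cases b with ⟨hb, _⟩ | ⟨hb, _⟩ <;>
    rcases abs_cases (a + b) with ⟨hc, _⟩ | ⟨hc, _⟩ <;>
    rcases abs_cases (a - b) with ⟨hd, _⟩ | ⟨hd, _⟩ <;>
    rcases max_cases |a| |b| with ⟨he, _⟩ | ⟨he, _⟩ <;> linarith
  rw [← mul_add p |a + b|, hmax]
  rcases max_cases |a| |b| with ⟨he, _⟩ | ⟨he, _⟩ <;> rw [he] <;> linarith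

lemma spectralGap_le_ten_mul {V : Type*} [Fintype V] {n : ℕ} (hn : 2 ≤ n)
    {N : Matrix V V ℝ} (hN : ∀ u v, 0 ≤ N u v)
    (b : OrthonormalBasis (Fin n) ℝ (EuclideanSpace ℝ V)) {μ : Fin n → ℝ} (hμ : Antitone μ)
    (hb : ∀ i, Matrix.toEuclideanLin N (b i) = μ i • b i) (hμ1 : μ ⟨0, by omega⟩ = 1) :
    1 - μ ⟨1, by omega⟩ ≤ 10 * (1 + μ ⟨n - 2, by omega⟩) := by
  by_contra! hlt
  have hgap : μ ⟨1, by omega⟩ ≤ 1 := hμ1 ▸ hμ (Fin.le_def.2 (Nat.zero_le _))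
  set p := b ⟨0, by omega⟩ with hp
  set f := b ⟨n - 2, by omega⟩ with hf
  set g := b ⟨n - 1, by omega⟩ with hg
  have hne : (⟨n - 2, by omega⟩ : Fin n) ≠ ⟨n - 1, by omega⟩ := by
    simp only [ne_eq, Fin.mk.injEq]
    omega
  have hfg : inner ℝ f g = 0 := b.inner_eq_zero hne
  have hbf : ∀ i < (⟨n - 2, by omega⟩ : Fin n), inner ℝ (b i) f = 0 :=
    fun i hi => b.inner_eq_zero hi.ne
  have hbg : ∀ i < (⟨n - 2, by omega⟩ : Fin n), inner ℝ (b i) g = 0 := fun i hi =>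
    b.inner_eq_zero (hi.trans_le (Fin.le_def.2 (by simp only; omega))).ne
  have hfn : ‖f‖ ^ 2 = 1 := by simp [hf]
  have hgn : ‖g‖ ^ 2 = 1 := by simp [hg]
  have hpn : ‖p‖ ^ 2 = 1 := by simp [hp]
  have hcorr (x : EuclideanSpace ℝ V) (c : ℝ) (hc : 0 ≤ c) (hcx : c ^ 2 ≤ 9 / 10 * ‖x‖ ^ 2)
      (hx0 : 0 < ‖x‖ ^ 2)
      (hx : ∀ i < (⟨n - 2, by omega⟩ : Fin n), inner ℝ (b i) x = 0) :
      c ≤ ∑ v, |p v| * |x v| := by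
    refine le_trans ?_ (abs_inner_euclideanAbs_le p x)
    refine abs_le_of_sq_le_sq' ?_ (abs_nonneg _) |>.2
    rw [sq_abs]
    have := spectralGap_mul_le_of_mem_bottom hn hN b hμ hb hμ1 hx
    by_contra! hcon
    nlinarith
  have hf' := hcorr f (47 / 50) (by norm_num) (by rw [hfn]; norm_num) (by simp [hfn]) hbf
  have hg' := hcorr g (47 / 50) (by norm_num) (by rw [hgn]; norm_num) (by simp [hgn]) hbg
  have hadd : ‖f + g‖ ^ 2 = 2 := by
    rw [norm_add_sq_real, hfg, hfn, hgn]; norm_num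
  have hsub : ‖f - g‖ ^ 2 = 2 := by
    rw [norm_sub_sq_real, hfg, hfn, hgn]; norm_num
  have hadd' := hcorr (f + g) (67 / 50) (by norm_num) (by rw [hadd]; norm_num) (by simp [hadd])
    fun i hi => by rw [inner_add_right, hbf i hi, hbg i hi, add_zero]
  have hsub' := hcorr (f - g) (67 / 50) (by norm_num) (by rw [hsub]; norm_num) (by simp [hsub])
    fun i hi => by rw [inner_sub_right, hbf i hi, hbg i hi, sub_zero]
  have hsum := Finset.sum_le_sum fun v (_ : v ∈ Finset.univ) => mul_abs_add_abs_le |p v| (f v) (g v)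
  simp only [Finset.sum_add_distrib, ← Finset.mul_sum, sq_abs] at hsum
  rw [EuclideanSpace.real_norm_sq_eq] at hfn hgn hpn
  simp only [PiLp.add_apply, PiLp.sub_apply] at hadd' hsub'
  rw [hfn, hgn, hpn] at hsum
  linarith

lemma eigenvalues₀_eq_of_charpoly_eq_s9 {V : Type*} [Fintype V] [DecidableEq V] {N : Matrix V V ℝ}
    (hN : N.IsHermitian) {μ : Fin (Fintype.card V) → ℝ} (hμ : Antitone μ)
    (hchar : N.charpoly = ∏ i, (X - C (μ i))) : hN.eigenvalues₀ = μ := by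
  have hroots : N.charpoly.roots = Multiset.map μ Finset.univ.val := by
    rw [hchar]
    exact Polynomial.roots_multiset_prod_X_sub_C (Multiset.map μ Finset.univ.val) ▸
      congrArg Polynomial.roots (by rw [Multiset.map_map]; rfl)
  rw [hN.roots_charpoly_eq_eigenvalues₀, Fin.univ_val_map, Fin.univ_val_map,
    Multiset.coe_eq_coe] at hroots
  exact List.ofFn_injective
    (hroots.eq_of_sortedGE hN.eigenvalues₀_antitone.sortedGE_ofFn hμ.sortedGE_ofFn)

/-- A symmetric matrix has an orthonormal eigenbasis listed in the order of any decreasing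
enumeration of the roots of its characteristic polynomial. -/
lemma exists_eigenbasis_of_charpoly_eq {V : Type*} [Fintype V] [DecidableEq V]
    {N : Matrix V V ℝ} (hN : N.IsHermitian) {μ : Fin (Fintype.card V) → ℝ} (hμ : Antitone μ)
    (hchar : N.charpoly = ∏ i, (X - C (μ i))) :
    ∃ b : OrthonormalBasis (Fin (Fintype.card V)) ℝ (EuclideanSpace ℝ V),
      ∀ i, Matrix.toEuclideanLin N (b i) = μ i • b i := by
  have hsymm := Matrix.isSymmetric_toEuclideanLin_iff.mpr hN
  refine ⟨hsymm.eigenvectorBasis finrank_euclideanSpace, fun i => ?_⟩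
  rw [← eigenvalues₀_eq_of_charpoly_eq_s9 hN hμ hchar]
  exact hsymm.apply_eigenvectorBasis finrank_euclideanSpace i

/-- The symmetric normalization `D^{-1/2} A D^{-1/2}` of the adjacency matrix. -/
def symmNormAdj {V : Type*} [Fintype V] (G : SimpleGraph V) : Matrix V V ℝ :=
  Matrix.of fun u v =>
    if G.Adj u v then (√(G.degree u : ℝ))⁻¹ * (√(G.degree v : ℝ))⁻¹ else 0

lemma symmNormAdj_nonneg {V : Type*} [Fintype V] (G : SimpleGraph V) (u v : V) :
    0 ≤ symmNormAdj G u v := by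
  simp only [symmNormAdj, Matrix.of_apply]
  split_ifs <;> positivity

lemma symmNormAdj_isHermitian {V : Type*} [Fintype V] (G : SimpleGraph V) :
    (symmNormAdj G).IsHermitian := by
  ext u v
  simp [symmNormAdj, G.adj_comm u v, mul_comm]

lemma charpoly_symmNormAdj {V : Type*} [Fintype V] (G : SimpleGraph V) :
    (symmNormAdj G).charpoly = (normAdj G).charpoly := by
  set S : Matrix V V ℝ := Matrix.diagonal fun v => (√(G.degree v : ℝ))⁻¹ with hS
  have h1 : symmNormAdj G = (S * G.adjMatrix ℝ) * S := by
    ext u v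
    simp [symmNormAdj, hS, Matrix.diagonal_mul, -SimpleGraph.mul_adjMatrix_apply]
  have h2 : normAdj G = S * (S * G.adjMatrix ℝ) := by
    ext u v
    simp [normAdj, hS, Matrix.diagonal_mul, ← mul_inv, -SimpleGraph.mul_adjMatrix_apply]
  rw [h1, h2, Matrix.charpoly_mul_comm]

/-- **Corollary 2, first inequality**: for a finite connected graph with normalized
adjacency eigenvalues `μs (n-1) = μₙ ≤ ⋯ ≤ μs 1 = μ₂ ≤ μs 0 = μ₁ = 1` (listed with
multiplicity, in decreasing order, as the roots of the characteristic polynomial of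
`D⁻¹A`), one has `1 + μ_{n-1} ≥ 2(√(1 + (1-μ₂)/4) - 1)²`. -/
theorem one_add_secondSmallest_ge_of_spectralGap {V : Type*} [Fintype V] (G : SimpleGraph V)
    (hconn : G.Connected) (hn : 2 ≤ Fintype.card V)
    (μs : Fin (Fintype.card V) → ℝ) (hanti : Antitone μs)
    (hchar : (normAdj G).charpoly = ∏ i, (X - C (μs i)))
    (hμ1 : μs ⟨0, by omega⟩ = 1) :
    1 + μs ⟨Fintype.card V - 2, by omega⟩ ≥
      2 * (Real.sqrt (1 + (1 - μs ⟨1, by omega⟩) / 4) - 1) ^ 2 := by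
  rw [← charpoly_symmNormAdj] at hchar
  obtain ⟨b, hb⟩ := exists_eigenbasis_of_charpoly_eq (symmNormAdj_isHermitian G) hanti hchar
  have hgap := spectralGap_le_ten_mul hn (symmNormAdj_nonneg G) b hanti hb hμ1
  have hlow := neg_one_le_of_eigenbasis hn (symmNormAdj_nonneg G) b hanti hb hμ1 ⟨1, by omega⟩
  have hle : μs ⟨1, by omega⟩ ≤ 1 := hμ1 ▸ hanti (Fin.le_def.2 (Nat.zero_le _))
  generalize μs ⟨1, by omega⟩ = μ₂ at *
  have hsqrt1 : 1 ≤ √(1 + (1 - μ₂) / 4) := Real.one_le_sqrt.2 (by linarith)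
  have hsqrt2 : √(1 + (1 - μ₂) / 4) ≤ 1 + (1 - μ₂) / 8 :=
    Real.sqrt_le_iff.2 ⟨by linarith, by nlinarith [sq_nonneg (1 - μ₂)]⟩
  nlinarith [pow_le_pow_left₀ (sub_nonneg.2 hsqrt1) (sub_le_iff_le_add'.2 hsqrt2) 2]

end
end

section
/- Let G=(V,E) be a finite connected graph with normalized adjacency eigenvalues μ_n ≤ … ≤ μ_2 ≤ μ_1 = 1 and edge-expansion h. Then 1 + μ_{n-1} ≥ ((√3 − 1)^2 / 8) · h^2. -/
open Finset Polynomial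

noncomputable section
open scoped Classical

/-- Coarea inequality: an isoperimetric inequality for all subsets of `P` extends to nonnegative
functions supported in `P`. -/
theorem mul_sum_le_sum_abs_sub_of_isoperimetric {V : Type*} [Fintype V] (w : V → V → ℝ)
    (hsymm : ∀ u v, w u v = w v u) (d : V → ℝ) (h : ℝ) (P : Finset V)
    (hP : ∀ S ⊆ P, h * ∑ u ∈ S, d u ≤ ∑ u ∈ S, ∑ v ∈ Sᶜ, w u v)
    (φ : V → ℝ) (hφ : ∀ u, 0 ≤ φ u) (hsupp : ∀ u ∉ P, φ u = 0) :
    h * ∑ u, d u * φ u ≤ (1 / 2) * ∑ u, ∑ v, w u v * |φ u - φ v| := by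
  induction hk : (univ.filter fun u => φ u ≠ 0).card using Nat.strong_induction_on
    generalizing φ with
  | _ k ih =>
  set S := univ.filter fun u => φ u ≠ 0 with hSdef
  have memS : ∀ u, u ∈ S ↔ φ u ≠ 0 := fun u => by simp [hSdef]
  rcases S.eq_empty_or_nonempty with hS | hS
  · have hz : ∀ u, φ u = 0 := fun u => by
      by_contra hu
      have := (memS u).2 hu
      simp [hS] at this
    simp [hz]
  obtain ⟨a, haS, hmin⟩ := S.exists_min_image φ hS
  have ha : 0 < φ a := lt_of_le_of_ne (hφ a) (Ne.symm ((memS a).1 haS))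
  set ψ : V → ℝ := fun u => if u ∈ S then φ u - φ a else 0 with hψ
  have hψin : ∀ u ∈ S, ψ u = φ u - φ a := fun u hu => by simp [hψ, hu]
  have hψout : ∀ u ∉ S, ψ u = 0 := fun u hu => by simp [hψ, hu]
  have hφout : ∀ u ∉ S, φ u = 0 := fun u hu => by
    by_contra hne
    exact hu ((memS u).2 hne)
  have hψ0 : ∀ u, 0 ≤ ψ u := fun u => by
    by_cases hu : u ∈ S
    · rw [hψin u hu]; linarith [hmin u hu]
    · rw [hψout u hu]
  have hSP : S ⊆ P := fun u hu => by
    by_contra hne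
    exact (memS u).1 hu (hsupp u hne)
  have hlt : (univ.filter fun u => ψ u ≠ 0).card < k := by
    rw [← hk]
    apply Finset.card_lt_card
    refine (Finset.ssubset_iff_of_subset ?_).2 ⟨a, haS, ?_⟩
    · intro u hu
      by_contra hne
      simp [hψout u hne] at hu
    · simp [hψin a haS]
  have key := ih _ hlt ψ hψ0 (fun u hu => hψout u (fun hS => hu (hSP hS))) rfl
  have hl : ∑ u, d u * φ u = ∑ u, d u * ψ u + φ a * ∑ u ∈ S, d u := by
    rw [← Finset.sum_filter_add_sum_filter_not univ (fun u => u ∈ S) (fun u => d u * φ u),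
      ← Finset.sum_filter_add_sum_filter_not univ (fun u => u ∈ S) (fun u => d u * ψ u)]
    have h1 : ∑ u ∈ univ with u ∉ S, d u * φ u = 0 :=
      Finset.sum_eq_zero fun u hu => by rw [hφout u (by simpa using hu), mul_zero]
    have h2 : ∑ u ∈ univ with u ∉ S, d u * ψ u = 0 :=
      Finset.sum_eq_zero fun u hu => by rw [hψout u (by simpa using hu), mul_zero]
    have h3 : (univ.filter fun u => u ∈ S) = S := by ext; simp
    rw [h1, h2, h3, Finset.mul_sum, add_zero, add_zero, ← Finset.sum_add_distrib]
    refine Finset.sum_congr rfl fun u hu => ?_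
    rw [hψin u hu]; ring
  have hb : ∑ u, ∑ v, (if u ∈ S then (if v ∈ S then 0 else w u v) else 0)
      = ∑ u ∈ S, ∑ v ∈ Sᶜ, w u v := by
    have h3 : ∀ u, (∑ v, if v ∈ S then 0 else w u v) = ∑ v ∈ Sᶜ, w u v := fun u => by
      rw [← Finset.sum_filter_not_add_sum_filter univ (fun v => v ∈ S)]
      have : (univ.filter fun v => v ∉ S) = Sᶜ := by ext; simp
      rw [this, Finset.sum_congr rfl (g := fun v => w u v)
        (fun v hv => by simp [Finset.mem_compl.1 hv]), Finset.sum_eq_zero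
        (s := univ.filter fun v => v ∈ S) (fun v hv => by simp_all), add_zero]
    rw [← Finset.sum_subset (Finset.subset_univ S) (fun u _ hu => by simp [hu])]
    exact Finset.sum_congr rfl fun u hu => by simp only [hu, if_true, h3]
  have hr : ∑ u, ∑ v, w u v * |φ u - φ v| = ∑ u, ∑ v, w u v * |ψ u - ψ v|
      + 2 * φ a * ∑ u ∈ S, ∑ v ∈ Sᶜ, w u v := by
    have hpt : ∀ u v, w u v * |φ u - φ v| = w u v * |ψ u - ψ v|
        + φ a * (if u ∈ S then (if v ∈ S then 0 else w u v) else 0)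
        + φ a * (if v ∈ S then (if u ∈ S then 0 else w v u) else 0) := fun u v => by
      by_cases hu : u ∈ S <;> by_cases hv : v ∈ S
      · simp [hu, hv, hψin u hu, hψin v hv]
      · have := hψ0 u
        rw [hψin u hu] at this
        simp only [hu, hv, hψin u hu, hψout v hv, hφout v hv, sub_zero, if_true, if_false,
          abs_of_nonneg (hφ u), abs_of_nonneg this]
        ring
      · have := hψ0 v
        rw [hψin v hv] at this
        simp only [hu, hv, hψin v hv, hψout u hu, hφout u hu, zero_sub, if_true, if_false, abs_neg,
          abs_of_nonneg (hφ v), abs_of_nonneg this, hsymm v u]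
        ring
      · simp [hu, hv, hψout u hu, hψout v hv, hφout u hu, hφout v hv]
    simp only [hpt, Finset.sum_add_distrib, ← Finset.mul_sum]
    rw [hb, Finset.sum_comm (f := fun u v => if v ∈ S then (if u ∈ S then 0 else w v u) else 0), hb]
    ring
  rw [hl, hr]
  have := mul_le_mul_of_nonneg_left (hP S hSP) ha.le
  nlinarith

/-- Cheeger's inequality for a function supported in a set all of whose subsets
satisfy an isoperimetric inequality (a Dirichlet boundary condition). -/
theorem sq_mul_sum_sq_le_of_isoperimetric {V : Type*} [Fintype V] (w : V → V → ℝ)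
    (hw : ∀ u v, 0 ≤ w u v) (hsymm : ∀ u v, w u v = w v u) (h : ℝ) (hh : 0 ≤ h) (P : Finset V)
    (hP : ∀ S ⊆ P, h * ∑ u ∈ S, ∑ v, w u v ≤ ∑ u ∈ S, ∑ v ∈ Sᶜ, w u v)
    (p : V → ℝ) (hsupp : ∀ u ∉ P, p u = 0) :
    h ^ 2 * ∑ u, (∑ v, w u v) * p u ^ 2 ≤ ∑ u, ∑ v, w u v * (p u - p v) ^ 2 := by
  have hT := mul_sum_le_sum_abs_sub_of_isoperimetric w hsymm (fun u => ∑ v, w u v) h P hP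
    (fun u => p u ^ 2) (fun u => sq_nonneg _) (fun u hu => by simp [hsupp u hu])
  have hCS : (∑ u, ∑ v, w u v * |p u ^ 2 - p v ^ 2|) ^ 2 ≤
      (∑ u, ∑ v, w u v * (p u - p v) ^ 2) * ∑ u, ∑ v, w u v * (p u + p v) ^ 2 := by
    simp only [← Fintype.sum_prod_type']
    apply Finset.sum_sq_le_sum_mul_sum_of_sq_le_mul
    · exact fun i _ => mul_nonneg (hw _ _) (sq_nonneg _)
    · exact fun i _ => mul_nonneg (hw _ _) (sq_nonneg _)
    · intro i _
      rw [mul_pow, sq_abs]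
      exact le_of_eq (by ring)
  have hsum : ∑ u, ∑ v, w u v * (p u + p v) ^ 2 ≤ 4 * ∑ u, (∑ v, w u v) * p u ^ 2 := by
    have h1 : ∑ u, ∑ v, w u v * p v ^ 2 = ∑ u, (∑ v, w u v) * p u ^ 2 := by
      rw [Finset.sum_comm]
      simp only [Finset.sum_mul]
      exact Finset.sum_congr rfl fun u _ => Finset.sum_congr rfl fun v _ => by rw [hsymm]
    have h2 : ∑ u, ∑ v, w u v * (p u + p v) ^ 2 ≤
        ∑ u, ∑ v, (2 * (w u v * p u ^ 2) + 2 * (w u v * p v ^ 2)) :=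
      Finset.sum_le_sum fun u _ => Finset.sum_le_sum fun v _ => by
        nlinarith [mul_nonneg (hw u v) (sq_nonneg (p u - p v))]
    simp only [Finset.sum_add_distrib, ← Finset.mul_sum, h1, ← Finset.sum_mul] at h2
    linarith
  have hX : 0 ≤ ∑ u, ∑ v, w u v * (p u - p v) ^ 2 :=
    Finset.sum_nonneg fun u _ => Finset.sum_nonneg fun v _ => mul_nonneg (hw _ _) (sq_nonneg _)
  have hB : 0 ≤ ∑ u, (∑ v, w u v) * p u ^ 2 :=
    Finset.sum_nonneg fun u _ => mul_nonneg (Finset.sum_nonneg fun v _ => hw _ _) (sq_nonneg _)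
  generalize ∑ u, (∑ v, w u v) * p u ^ 2 = B at *
  generalize ∑ u, ∑ v, w u v * (p u - p v) ^ 2 = X at *
  generalize ∑ u, ∑ v, w u v * |p u ^ 2 - p v ^ 2| = T at *
  generalize ∑ u, ∑ v, w u v * (p u + p v) ^ 2 = Y at *
  rcases hB.eq_or_lt with hB0 | hB0
  · rw [← hB0]; simpa using hX
  · refine le_of_mul_le_mul_right ?_ hB0
    have h1 : (h * B) ^ 2 ≤ (1 / 2 * T) ^ 2 := pow_le_pow_left₀ (mul_nonneg hh hB) hT 2
    have h2 := mul_le_mul_of_nonneg_left hsum hX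
    nlinarith

/-- Every function on a finite measure space has a median. -/
theorem exists_median {V : Type*} [Fintype V] [Nonempty V] (d : V → ℝ) (hd : ∀ u, 0 ≤ d u)
    (g : V → ℝ) : ∃ m : ℝ,
      ∑ u with m < g u, d u ≤ ∑ u ∈ (univ.filter fun u => m < g u)ᶜ, d u ∧
      ∑ u with g u < m, d u ≤ ∑ u ∈ (univ.filter fun u => g u < m)ᶜ, d u := by
  set T := univ.filter fun a =>
    ∑ u with g a < g u, d u ≤ ∑ u ∈ (univ.filter fun u => g a < g u)ᶜ, d u with hT
  have hTne : T.Nonempty := by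
    obtain ⟨a, -, ha⟩ := Finset.exists_max_image univ g Finset.univ_nonempty
    refine ⟨a, ?_⟩
    have : (univ.filter fun u => g a < g u) = ∅ := by
      ext u; simpa using ha u (mem_univ u)
    rw [hT, mem_filter, this]
    simpa using Finset.sum_nonneg fun u _ => hd u
  obtain ⟨a, haT, hmin⟩ := T.exists_min_image g hTne
  refine ⟨g a, (mem_filter.1 haT).2, ?_⟩
  rcases (univ.filter fun u => g u < g a).eq_empty_or_nonempty with hE | hE
  · rw [hE]; simpa using Finset.sum_nonneg fun u _ => hd u
  obtain ⟨b, hb, hmax⟩ := Finset.exists_max_image _ g hE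
  have hba : g b < g a := (mem_filter.1 hb).2
  have hbT : b ∉ T := fun hbT => absurd (hmin b hbT) (not_le.2 hba)
  have hset : (univ.filter fun u => g b < g u) = (univ.filter fun u => g u < g a)ᶜ := by
    ext u
    simp only [mem_filter, mem_univ, true_and, mem_compl, not_lt]
    refine ⟨fun h => ?_, fun h => hba.trans_le h⟩
    by_contra hlt
    exact absurd (hmax u (by simpa using hlt)) (not_le.2 h)
  have : ¬ (∑ u with g b < g u, d u ≤ ∑ u ∈ (univ.filter fun u => g b < g u)ᶜ, d u) :=
    fun h => hbT (mem_filter.2 ⟨mem_univ b, h⟩)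
  rw [hset, compl_compl] at this
  exact (not_le.1 this).le

/-- Cheeger's inequality for a function centred at a median. -/
theorem exists_sq_mul_sum_sq_sub_le {V : Type*} [Fintype V] [Nonempty V] (w : V → V → ℝ)
    (hw : ∀ u v, 0 ≤ w u v) (hsymm : ∀ u v, w u v = w v u) (h : ℝ) (hh : 0 ≤ h)
    (hiso : ∀ S : Finset V, ∑ u ∈ S, ∑ v, w u v ≤ ∑ u ∈ Sᶜ, ∑ v, w u v →
      h * ∑ u ∈ S, ∑ v, w u v ≤ ∑ u ∈ S, ∑ v ∈ Sᶜ, w u v) (g : V → ℝ) :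
    ∃ m : ℝ, h ^ 2 * ∑ u, (∑ v, w u v) * (g u - m) ^ 2 ≤ ∑ u, ∑ v, w u v * (g u - g v) ^ 2 := by
  have hd : ∀ u, 0 ≤ ∑ v, w u v := fun u => Finset.sum_nonneg fun v _ => hw u v
  obtain ⟨m, hgt, hlt⟩ := exists_median (fun u => ∑ v, w u v) hd g
  have hsub : ∀ P : Finset V, ∑ u ∈ P, ∑ v, w u v ≤ ∑ u ∈ Pᶜ, ∑ v, w u v →
      ∀ S ⊆ P, h * ∑ u ∈ S, ∑ v, w u v ≤ ∑ u ∈ S, ∑ v ∈ Sᶜ, w u v := fun P hP S hS =>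
    hiso S <| (Finset.sum_le_sum_of_subset_of_nonneg hS fun u _ _ => hd u).trans <| hP.trans <|
      Finset.sum_le_sum_of_subset_of_nonneg (Finset.compl_subset_compl.2 hS) fun u _ _ => hd u
  have h1 := sq_mul_sum_sq_le_of_isoperimetric w hw hsymm h hh _ (hsub _ hgt)
    (fun u => max (g u - m) 0)
    (fun u hu => max_eq_right (by simpa using hu))
  have h2 := sq_mul_sum_sq_le_of_isoperimetric w hw hsymm h hh _ (hsub _ hlt)
    (fun u => max (m - g u) 0)
    (fun u hu => max_eq_right (by simpa using hu))
  refine ⟨m, ?_⟩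
  have hl : ∑ u, (∑ v, w u v) * (g u - m) ^ 2 = ∑ u, (∑ v, w u v) * max (g u - m) 0 ^ 2
      + ∑ u, (∑ v, w u v) * max (m - g u) 0 ^ 2 := by
    rw [← Finset.sum_add_distrib]
    refine Finset.sum_congr rfl fun u _ => ?_
    rcases le_total (g u) m with hu | hu
    · rw [max_eq_right (by linarith), max_eq_left (by linarith)]; ring
    · rw [max_eq_left (by linarith), max_eq_right (by linarith)]; ring
  have hr : ∑ u, ∑ v, w u v * (max (g u - m) 0 - max (g v - m) 0) ^ 2
      + ∑ u, ∑ v, w u v * (max (m - g u) 0 - max (m - g v) 0) ^ 2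
      ≤ ∑ u, ∑ v, w u v * (g u - g v) ^ 2 := by
    simp only [← Finset.sum_add_distrib, ← mul_add]
    refine Finset.sum_le_sum fun u _ => Finset.sum_le_sum fun v _ =>
      mul_le_mul_of_nonneg_left ?_ (hw u v)
    rcases le_total (g u) m with hu | hu <;> rcases le_total (g v) m with hv | hv
    · rw [max_eq_right (a := g u - m) (by linarith), max_eq_left (a := m - g u) (by linarith),
        max_eq_right (a := g v - m) (by linarith), max_eq_left (a := m - g v) (by linarith)]
      nlinarith
    · rw [max_eq_right (a := g u - m) (by linarith), max_eq_left (a := m - g u) (by linarith),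
        max_eq_left (a := g v - m) (by linarith), max_eq_right (a := m - g v) (by linarith)]
      nlinarith
    · rw [max_eq_left (a := g u - m) (by linarith), max_eq_right (a := m - g u) (by linarith),
        max_eq_right (a := g v - m) (by linarith), max_eq_left (a := m - g v) (by linarith)]
      nlinarith
    · rw [max_eq_left (a := g u - m) (by linarith), max_eq_right (a := m - g u) (by linarith),
        max_eq_left (a := g v - m) (by linarith), max_eq_right (a := m - g v) (by linarith)]
      nlinarith
  rw [hl, mul_add]
  linarith

/-- The sum of the lengths of the projections of a plane vector onto four lines at angles that
are multiples of `π / 4`. -/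
theorem sq_sum_abs_four_directions_le (a b : ℝ) :
    (|a| + |b| + |√2 / 2 * a + √2 / 2 * b| + |√2 / 2 * a + -(√2 / 2) * b|) ^ 2
      ≤ (4 + 2 * √2) * (a ^ 2 + b ^ 2) := by
  have hs : √2 ^ 2 = 2 := Real.sq_sqrt (by norm_num)
  have hs0 : 0 ≤ √2 := Real.sqrt_nonneg 2
  have hmax : |√2 / 2 * a + √2 / 2 * b| + |√2 / 2 * a + -(√2 / 2) * b| = √2 * max |a| |b| := by
    rw [show √2 / 2 * a + √2 / 2 * b = √2 / 2 * (a + b) by ring,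
      show √2 / 2 * a + -(√2 / 2) * b = √2 / 2 * (a - b) by ring, abs_mul, abs_mul,
      abs_of_nonneg (by positivity : 0 ≤ √2 / 2)]
    have : |a + b| + |a - b| = 2 * max |a| |b| := by
      rcases le_total |a| |b| with h | h
      · rw [max_eq_right h]
        rcases abs_cases a with h1 | h1 <;> rcases abs_cases b with h2 | h2 <;>
        rcases abs_cases (a + b) with h3 | h3 <;> rcases abs_cases (a - b) with h4 | h4 <;> linarith
      · rw [max_eq_left h]
        rcases abs_cases a with h1 | h1 <;> rcases abs_cases b with h2 | h2 <;>
        rcases abs_cases (a + b) with h3 | h3 <;> rcases abs_cases (a - b) with h4 | h4 <;> linarith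
    linear_combination √2 / 2 * this
  rw [add_assoc (|a| + |b|), hmax, ← sq_abs a, ← sq_abs b]
  generalize |a| = x
  generalize |b| = y
  rcases le_total x y with h | h
  · rw [max_eq_right h]
    nlinarith [sq_nonneg (y - (1 + √2) * x)]
  · rw [max_eq_left h]
    nlinarith [sq_nonneg (x - (1 + √2) * y)]

/-- Every plane in a finite weighted `L²` space contains a unit vector whose `L¹` norm is bounded
away from the Cauchy–Schwarz bound. -/
theorem exists_unit_combination_sq_sum_abs_le {V : Type*} [Fintype V] (d : V → ℝ)
    (hd : ∀ u, 0 ≤ d u) (f g : V → ℝ) (hf : ∑ u, d u * f u ^ 2 = 1)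
    (hg : ∑ u, d u * g u ^ 2 = 1) :
    ∃ a b : ℝ, a ^ 2 + b ^ 2 = 1 ∧ (∑ u, d u * |a * f u + b * g u|) ^ 2 ≤ √3 / 2 * ∑ u, d u := by
  by_contra! hcon
  have hs : √2 ^ 2 = 2 := Real.sq_sqrt (by norm_num)
  have hs0 : 0 ≤ √2 := Real.sqrt_nonneg 2
  have ht : √3 ^ 2 = 3 := Real.sq_sqrt (by norm_num)
  have ht0 : 0 ≤ √3 := Real.sqrt_nonneg 3
  have hW : 0 ≤ ∑ u, d u := Finset.sum_nonneg fun u _ => hd u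
  have hlow : ∀ a b : ℝ, a ^ 2 + b ^ 2 = 1 →
      √(√3 / 2 * ∑ u, d u) < ∑ u, d u * |a * f u + b * g u| := fun a b hab =>
    Real.sqrt_lt' ((Finset.sum_nonneg fun u _ =>
      mul_nonneg (hd u) (abs_nonneg _)).lt_of_ne' fun h0 => by
        have := hcon a b hab
        rw [h0] at this
        nlinarith [mul_nonneg ht0 hW]) |>.2 (hcon a b hab)
  have h1 := hlow 1 0 (by norm_num)
  have h2 := hlow 0 1 (by norm_num)
  have h3 := hlow (√2 / 2) (√2 / 2) (by nlinarith)
  have h4 := hlow (√2 / 2) (-(√2 / 2)) (by nlinarith)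
  simp only [one_mul, zero_mul, add_zero, zero_add] at h1 h2
  have hup : (∑ u, d u * (|f u| + |g u| + |√2 / 2 * f u + √2 / 2 * g u|
      + |√2 / 2 * f u + -(√2 / 2) * g u|)) ^ 2 ≤
      (∑ u, d u) * ∑ u, d u * (|f u| + |g u| + |√2 / 2 * f u + √2 / 2 * g u|
      + |√2 / 2 * f u + -(√2 / 2) * g u|) ^ 2 :=
    Finset.sum_sq_le_sum_mul_sum_of_sq_le_mul _ (fun u _ => hd u)
      (fun u _ => mul_nonneg (hd u) (sq_nonneg _)) (fun u _ => le_of_eq (by ring))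
  have hup2 : ∑ u, d u * (|f u| + |g u| + |√2 / 2 * f u + √2 / 2 * g u|
      + |√2 / 2 * f u + -(√2 / 2) * g u|) ^ 2 ≤ (4 + 2 * √2) * 2 := by
    calc _ ≤ ∑ u, d u * ((4 + 2 * √2) * (f u ^ 2 + g u ^ 2)) :=
          Finset.sum_le_sum fun u _ =>
            mul_le_mul_of_nonneg_left (sq_sum_abs_four_directions_le _ _) (hd u)
      _ = (4 + 2 * √2) * (∑ u, d u * f u ^ 2 + ∑ u, d u * g u ^ 2) := by
          rw [← Finset.sum_add_distrib, Finset.mul_sum]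
          exact Finset.sum_congr rfl fun u _ => by ring
      _ = _ := by rw [hf, hg]; norm_num
  have hsplit : ∑ u, d u * (|f u| + |g u| + |√2 / 2 * f u + √2 / 2 * g u|
      + |√2 / 2 * f u + -(√2 / 2) * g u|) = ∑ u, d u * |f u| + ∑ u, d u * |g u|
      + ∑ u, d u * |√2 / 2 * f u + √2 / 2 * g u|
      + ∑ u, d u * |√2 / 2 * f u + -(√2 / 2) * g u| := by
    simp only [← Finset.sum_add_distrib, ← mul_add (d _)]
  rw [hsplit] at hup
  have hq := Real.sq_sqrt (mul_nonneg (by positivity : 0 ≤ √3 / 2) hW)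
  have hq0 := Real.sqrt_nonneg (√3 / 2 * ∑ u, d u)
  generalize √(√3 / 2 * ∑ u, d u) = q at *
  have hlt : (4 * q) ^ 2 < (∑ u, d u * |f u| + ∑ u, d u * |g u|
      + ∑ u, d u * |√2 / 2 * f u + √2 / 2 * g u|
      + ∑ u, d u * |√2 / 2 * f u + -(√2 / 2) * g u|) ^ 2 :=
    pow_lt_pow_left₀ (by linarith) (by linarith) (by norm_num)
  have hup3 := mul_le_mul_of_nonneg_left hup2 hW
  have hconst : (4 + 2 * √2) * 2 ≤ 8 * √3 := by
    have : √2 ≤ 1.42 := by rw [Real.sqrt_le_left (by norm_num)]; norm_num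
    have : 1.73 ≤ √3 := Real.le_sqrt_of_sq_le (by norm_num)
    linarith
  have := mul_le_mul_of_nonneg_left hconst hW
  nlinarith

theorem eq_of_antitone_of_prod_X_sub_C_eq {n : ℕ} {μ ν : Fin n → ℝ} (hμ : Antitone μ)
    (hν : Antitone ν) (h : ∏ i, (X - C (μ i)) = ∏ i, (X - C (ν i))) : μ = ν := by
  have hroots : ∀ ρ : Fin n → ℝ, (∏ i, (X - C (ρ i))).roots = (List.ofFn ρ : Multiset ℝ) :=
    fun ρ => by
      rw [Polynomial.roots_prod _ _ (by simp [Finset.prod_ne_zero_iff, Polynomial.X_sub_C_ne_zero])]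
      simp [Fin.univ_val_map]
  have hperm : (List.ofFn μ).Perm (List.ofFn ν) := by
    rw [← Multiset.coe_eq_coe, ← hroots, ← hroots, h]
  exact List.ofFn_inj.1 (hperm.eq_of_sortedGE hμ.sortedGE_ofFn hν.sortedGE_ofFn)

/-- Two orthonormal eigenfunctions for two given eigenvalues, listed with multiplicity, of the
reversible matrix with entries `w u v / d u`. -/
theorem exists_orthonormal_eigenfunctions {V : Type*} [Fintype V] (w : V → V → ℝ)
    (hsymm : ∀ u v, w u v = w v u) (d : V → ℝ) (hd : ∀ u, 0 < d u)
    (μs : Fin (Fintype.card V) → ℝ) (hanti : Antitone μs)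
    (hchar : (Matrix.of fun u v => (d u)⁻¹ * w u v).charpoly = ∏ i, (X - C (μs i)))
    {i j : Fin (Fintype.card V)} (hij : i ≠ j) :
    ∃ f g : V → ℝ, ∑ u, d u * f u ^ 2 = 1 ∧ ∑ u, d u * g u ^ 2 = 1 ∧
      ∑ u, d u * (f u * g u) = 0 ∧ (∀ u, ∑ v, w u v * f v = μs i * (d u * f u)) ∧
      ∀ u, ∑ v, w u v * g v = μs j * (d u * g u) := by
  have hs : ∀ u, 0 < √(d u) := fun u => Real.sqrt_pos.2 (hd u)
  have hss : ∀ u, √(d u) * √(d u) = d u := fun u => Real.mul_self_sqrt (hd u).le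
  set M : Matrix V V ℝ := Matrix.of fun u v => (√(d u))⁻¹ * w u v * (√(d v))⁻¹
  have hMapp : ∀ u v, M u v = (√(d u))⁻¹ * w u v * (√(d v))⁻¹ := fun u v => rfl
  have hM : M.IsHermitian := by
    ext u v
    simp only [hMapp, Matrix.conjTranspose_apply, star_trivial, hsymm v u]
    ring
  have hcharM : M.charpoly = ∏ i, (X - C (μs i)) := by
    rw [← hchar]
    have h1 : M = (Matrix.of fun u v => (√(d u))⁻¹ * w u v) *
        Matrix.diagonal fun u => (√(d u))⁻¹ := by
      ext u v; simp [hMapp, Matrix.mul_diagonal]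
    rw [h1, Matrix.charpoly_mul_comm]
    congr 1
    ext u v
    rw [Matrix.diagonal_mul, Matrix.of_apply, Matrix.of_apply, ← hss u, mul_inv, mul_assoc, hss u]
  have hμs : μs = hM.eigenvalues₀ := by
    refine eq_of_antitone_of_prod_X_sub_C_eq hanti hM.eigenvalues₀_antitone ?_
    rw [← hcharM, hM.charpoly_eq]
    exact Fintype.prod_equiv (Fintype.equivOfCardEq (Fintype.card_fin _)).symm _ _ fun i => rfl
  have hunit : ∀ i, ∑ u, d u * (hM.eigenvectorBasis i u / √(d u)) ^ 2 = 1 := fun i => by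
    have h1 := hM.eigenvectorBasis.orthonormal.1 i
    rw [EuclideanSpace.norm_eq, Real.sqrt_eq_one] at h1
    rw [← h1]
    refine Finset.sum_congr rfl fun u _ => ?_
    rw [div_pow, Real.sq_sqrt (hd u).le, Real.norm_eq_abs, sq_abs]
    field_simp [(hd u).ne']
  have horth : ∀ i j, i ≠ j → ∑ u, d u *
      (hM.eigenvectorBasis i u / √(d u) * (hM.eigenvectorBasis j u / √(d u))) = 0 := by
    intro i j hij
    have h1 : inner ℝ (hM.eigenvectorBasis i) (hM.eigenvectorBasis j) = 0 :=
      hM.eigenvectorBasis.orthonormal.2 hij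
    rw [PiLp.inner_apply] at h1
    rw [← h1]
    refine Finset.sum_congr rfl fun u _ => ?_
    rw [div_mul_div_comm, hss u, mul_div_cancel₀ _ (hd u).ne', real_inner_eq_re_inner]
    simp [mul_comm]
  have heig : ∀ i u, ∑ v, w u v * (hM.eigenvectorBasis i v / √(d v)) =
      hM.eigenvalues i * (d u * (hM.eigenvectorBasis i u / √(d u))) := fun i u => by
    have h1 := congrFun (hM.mulVec_eigenvectorBasis i) u
    simp only [Matrix.mulVec, dotProduct, hMapp, Pi.smul_apply, smul_eq_mul] at h1
    have h2 : ∑ v, (√(d u))⁻¹ * w u v * (√(d v))⁻¹ * hM.eigenvectorBasis i v =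
        (√(d u))⁻¹ * ∑ v, w u v * (hM.eigenvectorBasis i v / √(d v)) := by
      rw [Finset.mul_sum]
      exact Finset.sum_congr rfl fun v _ => by ring
    rw [h2, inv_mul_eq_iff_eq_mul₀ (hs u).ne'] at h1
    rw [h1, ← hss u, Real.sqrt_mul_self (hs u).le]
    field_simp [(hs u).ne']
  let e : Fin (Fintype.card V) ≃ V := Fintype.equivOfCardEq (Fintype.card_fin _)
  have hval : ∀ k, hM.eigenvalues (e k) = μs k := fun k => by
    rw [hμs]
    exact congrArg hM.eigenvalues₀ (e.symm_apply_apply k)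
  refine ⟨_, _, hunit (e i), hunit (e j), horth _ _ (e.injective.ne hij), ?_, ?_⟩
  · rw [← hval i]; exact heig _
  · rw [← hval j]; exact heig _

/-- The signless Dirichlet form is bounded by `1 + μ` on the span of two orthonormal eigenfunctions
with eigenvalues at most `μ`. -/
theorem sum_add_sq_le_of_eigenfunctions {V : Type*} [Fintype V] (w : V → V → ℝ)
    (hsymm : ∀ u v, w u v = w v u) {f g : V → ℝ} {α β μ : ℝ} (hα : α ≤ μ) (hβ : β ≤ μ)
    (hf : ∑ u, (∑ v, w u v) * f u ^ 2 = 1) (hg : ∑ u, (∑ v, w u v) * g u ^ 2 = 1)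
    (hfg : ∑ u, (∑ v, w u v) * (f u * g u) = 0)
    (hfe : ∀ u, ∑ v, w u v * f v = α * ((∑ v, w u v) * f u))
    (hge : ∀ u, ∑ v, w u v * g v = β * ((∑ v, w u v) * g u))
    {a b : ℝ} (hab : a ^ 2 + b ^ 2 = 1) :
    ∑ u, (∑ v, w u v) * (a * f u + b * g u) ^ 2 = 1 ∧
    ∑ u, ∑ v, w u v * ((a * f u + b * g u) + (a * f v + b * g v)) ^ 2 ≤ 2 * (1 + μ) := by
  set k : V → ℝ := fun u => a * f u + b * g u with hk
  have hnorm : ∑ u, (∑ v, w u v) * k u ^ 2 = 1 := by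
    have : ∀ u, (∑ v, w u v) * k u ^ 2 = a ^ 2 * ((∑ v, w u v) * f u ^ 2)
        + b ^ 2 * ((∑ v, w u v) * g u ^ 2) + 2 * a * b * ((∑ v, w u v) * (f u * g u)) :=
      fun u => by simp only [hk]; ring
    simp only [this, Finset.sum_add_distrib, ← Finset.mul_sum, hf, hg, hfg]
    linarith
  refine ⟨hnorm, ?_⟩
  have hke : ∀ u, ∑ v, w u v * k v = (∑ v, w u v) * (a * α * f u + b * β * g u) := fun u => by
    have : ∑ v, w u v * k v = a * ∑ v, w u v * f v + b * ∑ v, w u v * g v := by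
      rw [Finset.mul_sum, Finset.mul_sum, ← Finset.sum_add_distrib]
      exact Finset.sum_congr rfl fun v _ => by simp only [hk]; ring
    rw [this, hfe, hge]; ring
  have hcross : ∑ u, ∑ v, w u v * (k u * k v) = a ^ 2 * α + b ^ 2 * β := by
    have h1 : ∀ u, ∑ v, w u v * (k u * k v) = a ^ 2 * α * ((∑ v, w u v) * f u ^ 2)
        + b ^ 2 * β * ((∑ v, w u v) * g u ^ 2)
        + a * b * (α + β) * ((∑ v, w u v) * (f u * g u)) := fun u => by
      have : ∑ v, w u v * (k u * k v) = k u * ∑ v, w u v * k v := by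
        rw [Finset.mul_sum]
        exact Finset.sum_congr rfl fun v _ => by ring
      rw [this, hke]; simp only [hk]; ring
    simp only [h1, Finset.sum_add_distrib, ← Finset.mul_sum, hf, hg, hfg]
    ring
  have hswap : ∑ u, ∑ v, w u v * k v ^ 2 = 1 := by
    rw [Finset.sum_comm, ← hnorm]
    simp only [Finset.sum_mul]
    exact Finset.sum_congr rfl fun u _ => Finset.sum_congr rfl fun v _ => by rw [hsymm]
  have hexp : ∀ u v, w u v * (k u + k v) ^ 2 =
      w u v * k u ^ 2 + w u v * k v ^ 2 + 2 * (w u v * (k u * k v)) := fun u v => by ring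
  calc ∑ u, ∑ v, w u v * (k u + k v) ^ 2 = 1 + 1 + 2 * (a ^ 2 * α + b ^ 2 * β) := by
        simp only [hexp, Finset.sum_add_distrib, ← Finset.mul_sum, hswap, hcross, ← Finset.sum_mul,
          hnorm]
    _ ≤ 2 * (1 + μ) := by
        have h1 := mul_le_mul_of_nonneg_left hα (sq_nonneg a)
        have h2 := mul_le_mul_of_nonneg_left hβ (sq_nonneg b)
        have h3 : a ^ 2 * μ + b ^ 2 * μ = μ := by rw [← add_mul, hab, one_mul]
        linarith

theorem sum_ite_adj_eq_degree {V : Type*} [Fintype V] (G : SimpleGraph V) (u : V) :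
    (∑ v, if G.Adj u v then (1 : ℝ) else 0) = G.degree u := by
  rw [Finset.sum_boole, ← SimpleGraph.card_neighborFinset_eq_degree]
  congr 2
  ext v
  simp

theorem bdry_div_min_vol_nonneg {V : Type*} [Fintype V] (G : SimpleGraph V) (S : Finset V) :
    0 ≤ bdry G S / min (vol G S) (vol G Sᶜ) := by
  have hb : 0 ≤ bdry G S := Finset.sum_nonneg fun u _ => Finset.sum_nonneg fun v _ => by
    split_ifs <;> norm_num
  have hv : ∀ S, 0 ≤ vol G S := fun S => Finset.sum_nonneg fun u _ => Nat.cast_nonneg _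
  exact div_nonneg hb (le_min (hv _) (hv _))

theorem cheeger_mul_vol_le_bdry {V : Type*} [Fintype V] (G : SimpleGraph V)
    (hdeg : ∀ u, 0 < (G.degree u : ℝ)) (S : Finset V) (hS : vol G S ≤ vol G Sᶜ) :
    cheeger G * vol G S ≤ bdry G S := by
  rcases S.eq_empty_or_nonempty with rfl | hne
  · simp [vol, bdry]
  have hpos : 0 < vol G S := Finset.sum_pos (fun u _ => hdeg u) hne
  have hnu : S ≠ Finset.univ := by
    rintro rfl
    simp only [Finset.compl_univ] at hS
    have : vol G ∅ = 0 := Finset.sum_empty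
    linarith
  rw [← le_div_iff₀ hpos]
  refine csInf_le ⟨0, ?_⟩ ⟨S, hne, hnu, by rw [min_eq_left hS]⟩
  rintro x ⟨T, -, -, rfl⟩
  exact bdry_div_min_vol_nonneg G T

/-- **Corollary 2, second inequality**: for a finite connected graph with normalized
adjacency eigenvalues `μs (n-1) = μₙ ≤ ⋯ ≤ μs 1 = μ₂ ≤ μs 0 = μ₁ = 1` (listed with
multiplicity, in decreasing order, as the roots of the characteristic polynomial of
`D⁻¹A`) and edge-expansion `h`, one has `1 + μ_{n-1} ≥ ((√3 - 1)²/8)·h²`. -/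
theorem one_add_secondSmallest_ge_of_cheeger {V : Type*} [Fintype V] (G : SimpleGraph V)
    (hconn : G.Connected) (hn : 2 ≤ Fintype.card V)
    (μs : Fin (Fintype.card V) → ℝ) (hanti : Antitone μs)
    (hchar : (normAdj G).charpoly = ∏ i, (X - C (μs i)))
    (hμ1 : μs ⟨0, by omega⟩ = 1) :
    1 + μs ⟨Fintype.card V - 2, by omega⟩ ≥
      (Real.sqrt 3 - 1) ^ 2 / 8 * cheeger G ^ 2 := by
  have : Nontrivial V := Fintype.one_lt_card_iff_nontrivial.1 (by omega)
  set w : V → V → ℝ := fun u v => if G.Adj u v then 1 else 0 with hwdef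
  have hw : ∀ u v, 0 ≤ w u v := fun u v => by simp only [hwdef]; split_ifs <;> norm_num
  have hsymm : ∀ u v, w u v = w v u := fun u v => by simp only [hwdef, G.adj_comm]
  have hwd : ∀ u, ∑ v, w u v = G.degree u := sum_ite_adj_eq_degree G
  have hdeg : ∀ u, 0 < (G.degree u : ℝ) := fun u =>
    Nat.cast_pos.2 (hconn.preconnected.degree_pos_of_nontrivial u)
  have hd : ∀ u, 0 < ∑ v, w u v := fun u => by rw [hwd]; exact hdeg u
  have hmat : normAdj G = Matrix.of fun u v => (∑ v, w u v)⁻¹ * w u v := by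
    ext u v
    simp [normAdj, hwd u]
    simp [hwdef]
  rw [hmat] at hchar
  obtain ⟨f, g, hf, hg, hfg, hfe, hge⟩ :=
    exists_orthonormal_eigenfunctions w hsymm _ hd μs hanti hchar
      (i := ⟨Fintype.card V - 2, by omega⟩) (j := ⟨Fintype.card V - 1, by omega⟩)
      (by rw [Ne, Fin.mk.injEq]; omega)
  obtain ⟨a, b, hab, hL1⟩ :=
    exists_unit_combination_sq_sum_abs_le _ (fun u => (hd u).le) f g hf hg
  obtain ⟨hnorm, hQ⟩ := sum_add_sq_le_of_eigenfunctions w hsymm le_rfl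
    (hanti (by rw [Fin.mk_le_mk]; omega)) hf hg hfg hfe hge hab
  generalize μs ⟨Fintype.card V - 2, by omega⟩ = μ at *
  set k : V → ℝ := fun u => a * f u + b * g u with hk
  have hvol : ∀ S, vol G S = ∑ u ∈ S, ∑ v, w u v := fun S =>
    Finset.sum_congr rfl fun u _ => (hwd u).symm
  obtain ⟨m, hm⟩ := exists_sq_mul_sum_sq_sub_le w hw hsymm (cheeger G) (cheeger_nonneg G)
    (fun S hS => by
      rw [← hvol, ← hvol] at hS
      rw [← hvol]
      exact cheeger_mul_vol_le_bdry G hdeg S hS) (fun u => |k u|)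
  have hE : ∑ u, ∑ v, w u v * (|k u| - |k v|) ^ 2 ≤ ∑ u, ∑ v, w u v * (k u + k v) ^ 2 :=
    Finset.sum_le_sum fun u _ => Finset.sum_le_sum fun v _ => by
      refine mul_le_mul_of_nonneg_left ?_ (hw u v)
      nlinarith [neg_abs_le (k u * k v), abs_mul (k u) (k v), sq_abs (k u), sq_abs (k v)]
  have hvar : ∑ u, (∑ v, w u v) * (|k u| - m) ^ 2 =
      1 - 2 * m * ∑ u, (∑ v, w u v) * |k u| + m ^ 2 * ∑ u, ∑ v, w u v := by
    have : ∀ u, (∑ v, w u v) * (|k u| - m) ^ 2 = (∑ v, w u v) * k u ^ 2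
        - 2 * m * ((∑ v, w u v) * |k u|) + m ^ 2 * ∑ v, w u v := fun u => by
      rw [← sq_abs (k u)]; ring
    simp only [this, Finset.sum_add_distrib, Finset.sum_sub_distrib, ← Finset.mul_sum]
    rw [hnorm]
  have hW : 0 < ∑ u, ∑ v, w u v := Finset.sum_pos (fun u _ => hd u) Finset.univ_nonempty
  have hlow : 1 - √3 / 2 ≤ ∑ u, (∑ v, w u v) * (|k u| - m) ^ 2 := by
    rw [hvar]
    change (∑ u, (∑ v, w u v) * |k u|) ^ 2 ≤ _ at hL1
    generalize ∑ u, (∑ v, w u v) * |k u| = s at *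
    generalize ∑ u, ∑ v, w u v = W at *
    refine le_of_mul_le_mul_right ?_ hW
    nlinarith [sq_nonneg (m * W - s)]
  have hfin := mul_le_mul_of_nonneg_left hlow (sq_nonneg (cheeger G))
  have h3 : √3 ^ 2 = 3 := Real.sq_sqrt (by norm_num)
  have hc : (√3 - 1) ^ 2 / 8 = (1 - √3 / 2) / 2 := by linear_combination h3 / 8
  rw [hc]
  linarith

end
end
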